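/- Let 0 → A → B → C → 0 be a non-split short exact sequence of graded Λ-modules (with degree-preserving maps) in which A and C are indecomposable graded Cohen–Macaulay Λ-modules. Then there exist integers s < s' < t < t' < s + n such that A ≅ (s,t), B ≅ (s,t') ⊕ (s',t) and C ≅ (s',t') as graded Λ-modules. -/

import Mathlib

set_option synthInstance.maxHeartbeats 1000000
set_option maxHeartbeats 1000000

open Polynomial Matrix

noncomputable section

/-- The exponent `c_{ij}` (with 0-based indices `i j : Fin n`, corresponding to the 1-based
`c_{i+1,j+1} = δ_{i+1>j+1} + δ_{i+1>j+2} − δ_{(i+1,j+1)=(1,n)}`). -/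
def cExp (n : ℕ) (i j : Fin n) : ℤ :=
  (if (j : ℕ) < (i : ℕ) then 1 else 0) + (if (j : ℕ) + 1 < (i : ℕ) then 1 else 0)
    - (if (i : ℕ) = 0 ∧ (j : ℕ) = n - 1 then 1 else 0)

/-- The subset `x^c · K[x]` of `K(x)`. -/
def xPow (K : Type*) [Field K] (c : ℤ) : Set (RatFunc K) :=
  {f | ∃ p : Polynomial K, f = RatFunc.X ^ c * algebraMap (Polynomial K) (RatFunc K) p}

/-- The carrier set of the tiled order `Λ ⊆ M_n(K(x))`:
matrices whose `(i,j)` entry lies in `x^{c_{ij}}·K[x]`. -/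
def lambdaCarrier (K : Type*) [Field K] (n : ℕ) : Set (Matrix (Fin n) (Fin n) (RatFunc K)) :=
  {M | ∀ i j, M i j ∈ xPow K (cExp n i j)}

/-- Exponent pattern of the module `(i,j)` (1-based `i j`; `k : ℕ` is a 0-based coordinate,
so the 1-based coordinate is `k+1`): `0` for `k+1 ≤ i`, `1` for `i < k+1 ≤ j`, `2` otherwise. -/
def dExp (i j k : ℕ) : ℤ := if k + 1 ≤ i then 0 else if k + 1 ≤ j then 1 else 2

/-- The carrier set of the `Λ`-module `(i,j)` inside the column space `K(x)^n`. -/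
def ijSet (K : Type*) [Field K] (n : ℕ) (i j : ℕ) : Set (Fin n → RatFunc K) :=
  {v | ∀ k : Fin n, v k ∈ xPow K (dExp i j (k : ℕ))}

/-- Column vectors form a module over the matrix ring via `mulVec`. -/
instance matVecModule (K : Type*) [Field K] (n : ℕ) :
    Module (Matrix (Fin n) (Fin n) (RatFunc K)) (Fin n → RatFunc K) where
  smul M v := M.mulVec v
  one_smul v := Matrix.one_mulVec v
  mul_smul M N v := (Matrix.mulVec_mulVec v M N).symm
  smul_zero M := Matrix.mulVec_zero M
  smul_add M u v := Matrix.mulVec_add M u v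
  add_smul M N v := Matrix.add_mulVec M N v
  zero_smul v := Matrix.zero_mulVec v

/-- The set of homogeneous elements `c·x^m` (`c ∈ K`) of degree `m` in `K(x)`. -/
def homogSet (K : Type) [Field K] (m : ℤ) : Set (RatFunc K) :=
  {f | ∃ c : K, f = algebraMap K (RatFunc K) c * RatFunc.X ^ m}

/-- The additive subgroup `(K·x^m)^n` of the column space. -/
def homogGroup (K : Type) [Field K] (n : ℕ) (m : ℤ) : AddSubgroup (Fin n → RatFunc K) where
  carrier := {v | ∀ k : Fin n, v k ∈ homogSet K m}
  add_mem' := by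
    rintro u v hu hv k
    obtain ⟨c, hc⟩ := hu k
    obtain ⟨c', hc'⟩ := hv k
    exact ⟨c + c', by simp [hc, hc', add_mul]⟩
  zero_mem' := fun k => ⟨0, by simp⟩
  neg_mem' := by
    rintro v hv k
    obtain ⟨c, hc⟩ := hv k
    exact ⟨-c, by simp [hc]⟩

section Graded

variable {K : Type} [Field K] {n : ℕ}
variable (Λ : Subalgebra (Polynomial K) (Matrix (Fin n) (Fin n) (RatFunc K)))

/-- `u ∈ Λ` is homogeneous of degree `m`: all its entries lie in `K·x^m`. -/
def LambdaDeg (u : ↥Λ) (m : ℤ) : Prop :=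
  ∀ i j, (↑u : Matrix (Fin n) (Fin n) (RatFunc K)) i j ∈ homogSet K m

/-- `g` is a grading making the `Λ`-module `M` a graded `Λ`-module:
`M = ⊕_m g m` and `Λ_a · M_b ⊆ M_{a+b}`. -/
def IsModGrading (M : Type*) [AddCommGroup M] [Module ↥Λ M] (g : ℤ → AddSubgroup M) : Prop :=
  DirectSum.IsInternal g ∧
    ∀ (a b : ℤ) (u : ↥Λ), LambdaDeg Λ u a → ∀ v ∈ g b, u • v ∈ g (a + b)

/-- A `Λ`-submodule is graded (w.r.t. the grading `g`) if it is generated by its homogeneous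
elements. -/
def IsGradedSubmodule {M : Type*} [AddCommGroup M] [Module ↥Λ M] (g : ℤ → AddSubgroup M)
    (A : Submodule ↥Λ M) : Prop :=
  A ≤ Submodule.span ↥Λ ((A : Set M) ∩ ⋃ m : ℤ, (g m : Set M))

/-- The graded module `(M, g)` is indecomposable: it is nonzero and is not the direct sum of
two nonzero graded submodules. -/
def GradedIndecomposable (M : Type*) [AddCommGroup M] [Module ↥Λ M]
    (g : ℤ → AddSubgroup M) : Prop :=
  Nontrivial M ∧
    ¬ ∃ A B : Submodule ↥Λ M, IsGradedSubmodule Λ g A ∧ IsGradedSubmodule Λ g B ∧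
      IsCompl A B ∧ A ≠ ⊥ ∧ B ≠ ⊥

/-- The grading of the concrete module `(i,j)`: the degree-`m` part is
`(i,j) ∩ (K·x^m)^n`. -/
def gEij (E : ℕ → ℕ → Submodule ↥Λ (Fin n → RatFunc K)) (i j : ℕ) (m : ℤ) :
    AddSubgroup ↥(E i j) :=
  (homogGroup K n m).comap (E i j).subtype.toAddMonoidHom

end Graded

/-- The residue of `a` in `{1, …, n}` modulo `n`. -/
def rres (n : ℕ) (a : ℤ) : ℤ := (a - 1) % (n : ℤ) + 1

/-- For integers `a < b` with `0 < b − a < n`, the base pair `(i, j)` (with `1 ≤ i < j ≤ n`)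
and the shift `σ` such that the extended module `(a,b)` equals `(i,j)(σ)`:
`(i+kn, j+kn) = (i,j)(2k)` and `(j+kn, i+(k+1)n) = (i,j)(2k+1)`. -/
def baseIdx (n : ℕ) (a b : ℤ) : ℕ × ℕ × ℤ :=
  if rres n a < rres n b then
    ((rres n a).toNat, (rres n b).toNat, 2 * ((a - rres n a) / (n : ℤ)))
  else
    ((rres n b).toNat, (rres n a).toNat, 2 * ((a - rres n a) / (n : ℤ)) + 1)

section GradedIso

variable {K : Type} [Field K] {n : ℕ}
variable (Λ : Subalgebra (Polynomial K) (Matrix (Fin n) (Fin n) (RatFunc K)))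
variable (E : ℕ → ℕ → Submodule ↥Λ (Fin n → RatFunc K))

/-- The graded `Λ`-module `(M, g)` is isomorphic (by a degree-preserving `Λ`-linear
isomorphism) to the extended module `(a,b)`, i.e. to the shift `(i,j)(σ)` where
`(i, j, σ) = baseIdx n a b`. -/
def GradedIsoTo (M : Type*) [AddCommGroup M] [Module ↥Λ M] (g : ℤ → AddSubgroup M)
    (a b : ℤ) : Prop :=
  ∃ e : M ≃ₗ[↥Λ] ↥(E (baseIdx n a b).1 (baseIdx n a b).2.1),
    ∀ (m : ℤ) (v : M), v ∈ g m ↔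
      e v ∈ gEij Λ E (baseIdx n a b).1 (baseIdx n a b).2.1 ((baseIdx n a b).2.2 + m)

/-- The graded `Λ`-module `(M, g)` is isomorphic (by a degree-preserving `Λ`-linear
isomorphism) to the direct sum of the extended modules `(a,b)` and `(a',b')`. -/
def GradedIsoToSum (M : Type*) [AddCommGroup M] [Module ↥Λ M] (g : ℤ → AddSubgroup M)
    (a b a' b' : ℤ) : Prop :=
  ∃ e : M ≃ₗ[↥Λ]
      (↥(E (baseIdx n a b).1 (baseIdx n a b).2.1) ×
        ↥(E (baseIdx n a' b').1 (baseIdx n a' b').2.1)),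
    ∀ (m : ℤ) (v : M), v ∈ g m ↔
      e v ∈ (gEij Λ E (baseIdx n a b).1 (baseIdx n a b).2.1
              ((baseIdx n a b).2.2 + m)).prod
            (gEij Λ E (baseIdx n a' b').1 (baseIdx n a' b').2.1
              ((baseIdx n a' b').2.2 + m))

end GradedIso

universe u

/-!
Localising a graded `Λ`-module at `x = 1` identifies all its components with a single vector
space, its fibre, in which the homogeneous parts of the components become two interleaved
decreasing filtrations of period `n`. A vector `v` lying in the first exactly up to step `s` and in
the second exactly up to step `t`, with a functional `φ` killing all later steps and `φ v = 1`,
splits off a graded summand `(s, t)`. Hence an indecomposable Cohen–Macaulay module has a line as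
its fibre, and is determined by the pair `(s, t)`.

For an extension of `(s', t')` by `(s, t)` the fibre `V` of the middle term is a plane containing
the line spanned by the image `α` of the generator of the first fibre. The generator of the
quotient line lifts to `β` in step `s'` of the first filtration and to `β'` in step `t'` of the
second. If the lifts can be chosen equal, the sequence splits. Otherwise `β - β'` is always a
nonzero multiple of `α`, which forces `s < s'` and `t < t'`; then `β` splits off `(s', t)` and `β'`
splits off `(s, t')`.
-/

open DirectSum (Decomposition decompose decompose_add decompose_of_mem_ne decompose_of_mem_same
  sum_support_decompose)

section LinearAlgebra

variable {K V : Type*} [Field K] [AddCommGroup V] [Module K V] {n : ℕ}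

lemma exists_ne_bot_and_succ_eq_bot {L : Type*} [PartialOrder L] [OrderBot L] {G : ℤ → L}
    (hG : Antitone G) (hne : ∃ p, G p ≠ ⊥) (hbot : ∃ p, G p = ⊥) :
    ∃ p, G p ≠ ⊥ ∧ G (p + 1) = ⊥ := by
  obtain ⟨q, hq⟩ := hbot
  obtain ⟨p, hp, hmax⟩ := Int.exists_greatest_of_bdd (P := fun p => G p ≠ ⊥)
    ⟨q, fun p hp => by_contra fun h => hp (le_bot_iff.1 (hq ▸ hG (not_le.1 h).le))⟩ hne
  exact ⟨p, hp, by_contra fun h => (lt_add_one p).not_ge (hmax _ h)⟩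

lemma exists_dual_pair {α β β' : V} {γ : V →ₗ[K] K} {δ : K} (hα : α ≠ 0) (hδ : δ ≠ 0)
    (hγα : γ α = 0) (hγβ' : γ β' = 1) (hβ : β = β' + δ • α) :
    ∃ φ : V →ₗ[K] K, φ β = 1 ∧ φ β' = 0 ∧ φ α ≠ 0 := by
  obtain ⟨ρ, hρ⟩ := Module.Projective.exists_dual_eq_one K hα
  refine ⟨δ⁻¹ • (ρ - ρ β' • γ), ?_, by simp [hγβ'], by simp [hρ, hγα, hδ]⟩
  simp [hβ, hρ, hγα, hγβ', hδ]

/-- Two interleaved decreasing `ℤ`-filtrations of a vector space, with period `n`. -/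
structure Bifiltration (K V : Type*) [Field K] [AddCommGroup V] [Module K V] (n : ℕ) where
  even : ℤ → Submodule K V
  odd : ℤ → Submodule K V
  antitone_even : Antitone even
  antitone_odd : Antitone odd
  even_le_odd (p : ℤ) : even p ≤ odd (p + 1)
  odd_le_even (p : ℤ) : odd p ≤ even (p + 1 - n)

/-- The vector `v` and the functional `φ` with `φ v = 1` split off from the bifiltration a line
which lies in the even steps exactly up to `s` and in the odd steps exactly up to `t`. -/
structure Bifiltration.IsAdapted (F : Bifiltration K V n) (v : V) (φ : V →ₗ[K] K) (s t : ℤ) :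
    Prop where
  apply_eq_one : φ v = 1
  mem_even : v ∈ F.even s
  mem_odd : v ∈ F.odd t
  even_le_ker : F.even (s + 1) ≤ LinearMap.ker φ
  odd_le_ker : F.odd (t + 1) ≤ LinearMap.ker φ

namespace Bifiltration

variable {F : Bifiltration K V n}

namespace IsAdapted

variable {v : V} {φ : V →ₗ[K] K} {s t : ℤ}

lemma notMem_ker (h : F.IsAdapted v φ s t) : v ∉ LinearMap.ker φ := by
  simp [LinearMap.mem_ker, h.apply_eq_one]

lemma lt (h : F.IsAdapted v φ s t) : s < t := by
  by_contra! hts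
  exact h.notMem_ker <| h.odd_le_ker <| F.antitone_odd (by omega) <| F.even_le_odd s h.mem_even

lemma lt_add (h : F.IsAdapted v φ s t) : t < s + n := by
  by_contra! hst
  exact h.notMem_ker <| h.even_le_ker <| F.antitone_even (by omega) <| F.odd_le_even t h.mem_odd

lemma span_eq_top (h : F.IsAdapted v φ s t) (hφ : LinearMap.ker φ = ⊥) : K ∙ v = ⊤ := by
  refine Submodule.eq_top_iff'.2 fun x => Submodule.mem_span_singleton.2 ⟨φ x, ?_⟩
  exact LinearMap.ker_eq_bot.1 hφ (by simp [h.apply_eq_one])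

lemma disjoint_span_ker (h : F.IsAdapted v φ s t) : Disjoint (K ∙ v) (LinearMap.ker φ) :=
  (Submodule.disjoint_span_singleton_of_notMem h.notMem_ker).symm

end IsAdapted

lemma exists_isAdapted (hne : ∃ p, F.even p ≠ ⊥) (hbot : ∃ p, F.even p = ⊥) :
    ∃ v φ s t, F.IsAdapted v φ s t := by
  obtain ⟨s, hs, hs'⟩ := exists_ne_bot_and_succ_eq_bot F.antitone_even hne hbot
  have hodd : ∃ t, F.even s ⊓ F.odd t ≠ ⊥ := ⟨s + 1, by rwa [inf_eq_left.2 (F.even_le_odd s)]⟩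
  have hodd' : ∃ t, F.even s ⊓ F.odd t = ⊥ := by
    refine ⟨s + n, le_bot_iff.1 (inf_le_right.trans ?_)⟩
    simpa only [add_right_comm s (n : ℤ) 1, add_sub_cancel_right, hs'] using
      F.odd_le_even (s + n)
  obtain ⟨t, ht, ht'⟩ := exists_ne_bot_and_succ_eq_bot
    (fun p q h => inf_le_inf_left _ (F.antitone_odd h)) hodd hodd'
  obtain ⟨v, ⟨hvs, hvt⟩, hv⟩ := Submodule.exists_mem_ne_zero_of_ne_bot ht
  have hv' : v ∉ F.odd (t + 1) := fun h => hv <| (Submodule.mem_bot K).1 (ht' ▸ ⟨hvs, h⟩)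
  obtain ⟨φ, hφ, hle⟩ := Submodule.exists_le_ker_of_notMem hv'
  exact ⟨v, (φ v)⁻¹ • φ, s, t, by simp [hφ], hvs, hvt, by simp [hs'],
    hle.trans fun x hx => by simp_all⟩

end Bifiltration

/-- The decreasing filtration `G`, restricted to the kernel of `γ`, contains the vector `α` in
step `s` and is zero afterwards; its image under `γ` is the line in step `s'` and is zero
afterwards. -/
structure ExtendsAt (G : ℤ → Submodule K V) (α : V) (γ : V →ₗ[K] K) (s s' : ℤ) : Prop where
  mem : α ∈ G s
  inf_ker : G (s + 1) ⊓ LinearMap.ker γ = ⊥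
  exists_lift : ∃ β ∈ G s', γ β = 1
  le_ker : G (s' + 1) ≤ LinearMap.ker γ

namespace ExtendsAt

variable {G : ℤ → Submodule K V} {α β : V} {γ φ : V →ₗ[K] K} {s s' : ℤ}

lemma eq_bot_of_lt (h : ExtendsAt G α γ s s') (hG : Antitone G) (hs : s < s') :
    G (s' + 1) = ⊥ :=
  le_bot_iff.1 <| h.inf_ker ▸ le_inf (hG (by omega)) h.le_ker

lemma le_ker_of_lt (h : ExtendsAt G α γ s s') (hG : Antitone G) (hs : s < s')
    (hβ : β ∈ G s') (hγ : γ β = 1) (hφ : φ β = 0) : G (s + 1) ≤ LinearMap.ker φ := by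
  intro x hx
  have hmem : x - γ x • β ∈ G (s + 1) ⊓ LinearMap.ker γ :=
    ⟨sub_mem hx (Submodule.smul_mem _ _ (hG (by omega) hβ)), by simp [hγ]⟩
  rw [h.inf_ker, Submodule.mem_bot, sub_eq_zero] at hmem
  rw [LinearMap.mem_ker, hmem, map_smul, hφ, smul_zero]

end ExtendsAt

lemma extendsAt_of_map_eq {U W : Type*} [AddCommGroup U] [Module K U] [AddCommGroup W]
    [Module K W] {ι : U →ₗ[K] V} {π : V →ₗ[K] W} {GU : ℤ → Submodule K U}
    {GV : ℤ → Submodule K V} {GW : ℤ → Submodule K W}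
    (hι : ∀ p, (GU p).map ι = GV p ⊓ LinearMap.ker π) (hπ : ∀ p, (GV p).map π = GW p)
    {u : U} {φ : U →ₗ[K] K} {w : W} {ψ : W →ₗ[K] K} {s s' : ℤ}
    (hu : u ∈ GU s) (hφ : GU (s + 1) ≤ LinearMap.ker φ) (hφ0 : LinearMap.ker φ = ⊥)
    (hw : w ∈ GW s') (hψw : ψ w = 1) (hψ : GW (s' + 1) ≤ LinearMap.ker ψ)
    (hψ0 : LinearMap.ker ψ = ⊥) :
    ExtendsAt GV (ι u) (ψ ∘ₗ π) s s' := by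
  have hker : LinearMap.ker (ψ ∘ₗ π) = LinearMap.ker π :=
    LinearMap.ker_comp_of_ker_eq_bot π hψ0
  refine ⟨((hι s).le ⟨u, hu, rfl⟩).1, ?_, ?_, ?_⟩
  · rw [hker, ← hι, le_bot_iff.1 (hφ.trans hφ0.le), Submodule.map_bot]
  · obtain ⟨β, hβ, rfl⟩ := (hπ s').ge hw
    exact ⟨β, hβ, hψw⟩
  · rw [LinearMap.ker_comp, ← Submodule.map_le_iff_le_comap, hπ]
    exact hψ

namespace Bifiltration

variable {F : Bifiltration K V n} {α β β' : V} {γ : V →ₗ[K] K} {s s' t t' : ℤ}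

lemma exists_adapted_basis (hα : α ≠ 0) (hker : LinearMap.ker γ = K ∙ α)
    (he : ExtendsAt F.even α γ s s') (ho : ExtendsAt F.odd α γ t t') (hs : s < s') (ht : t < t')
    {δ : K} (hδ : δ ≠ 0) (hβ : β ∈ F.even s') (hβ' : β' ∈ F.odd t') (hγβ' : γ β' = 1)
    (hββ' : β = β' + δ • α) :
    ∃ φ φ', F.IsAdapted β φ s' t ∧ F.IsAdapted β' φ' s t' ∧ φ β' = 0 ∧ φ' β = 0 ∧
      Disjoint (LinearMap.ker φ) (LinearMap.ker φ') := by
  have hγα : γ α = 0 := LinearMap.mem_ker.1 (hker ▸ Submodule.mem_span_singleton_self α)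
  have hγβ : γ β = 1 := by simp [hββ', hγα, hγβ']
  obtain ⟨φ, hφβ, hφβ', hφα⟩ := exists_dual_pair hα hδ hγα hγβ' hββ'
  refine ⟨φ, γ - φ, ⟨hφβ, hβ, ?_, ?_, ?_⟩, ⟨by simp [hγβ', hφβ'], ?_, hβ', ?_, ?_⟩, hφβ',
    by simp [hγβ, hφβ], Submodule.disjoint_def.2 fun x hx hx' => ?_⟩
  · rw [hββ']
    exact add_mem (F.antitone_odd ht.le hβ') (Submodule.smul_mem _ _ ho.mem)
  · simp [he.eq_bot_of_lt F.antitone_even hs]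
  · exact ho.le_ker_of_lt F.antitone_odd ht hβ' hγβ' hφβ'
  · rw [← sub_eq_of_eq_add hββ']
    exact sub_mem (F.antitone_even hs.le hβ) (Submodule.smul_mem _ _ he.mem)
  · exact he.le_ker_of_lt F.antitone_even hs hβ hγβ (by simp [hγβ, hφβ])
  · simp [ho.eq_bot_of_lt F.antitone_odd ht]
  · rw [LinearMap.mem_ker] at hx
    have hγx : γ x = 0 := by simpa [hx] using hx'
    obtain ⟨c, rfl⟩ : ∃ c : K, c • α = x := Submodule.mem_span_singleton.1 (hker ▸ hγx)
    have hc : c = 0 := by simpa [hφα] using hx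
    rw [hc, zero_smul]

lemma exists_lift_or_exists_adapted_basis (hα : α ≠ 0) (hker : LinearMap.ker γ = K ∙ α)
    (he : ExtendsAt F.even α γ s s') (ho : ExtendsAt F.odd α γ t t') :
    (∃ β, F.IsAdapted β γ s' t') ∨
    s < s' ∧ t < t' ∧ ∃ β β' φ φ', F.IsAdapted β φ s' t ∧ F.IsAdapted β' φ' s t' ∧
      φ β' = 0 ∧ φ' β = 0 ∧ Disjoint (LinearMap.ker φ) (LinearMap.ker φ') := by
  rw [or_iff_not_imp_left]
  intro hno
  have not_common {x : V} (hxe : x ∈ F.even s') (hxo : x ∈ F.odd t') (hx : γ x = 1) : False :=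
    hno ⟨x, hx, hxe, hxo, he.le_ker, ho.le_ker⟩
  obtain ⟨β, hβ, hγβ⟩ := he.exists_lift
  obtain ⟨β', hβ', hγβ'⟩ := ho.exists_lift
  obtain ⟨δ, hδ⟩ : ∃ δ : K, δ • α = β - β' :=
    Submodule.mem_span_singleton.1 (hker ▸ by simp [hγβ, hγβ'])
  have hββ' : β = β' + δ • α := by rw [hδ, add_sub_cancel]
  have hδ0 : δ ≠ 0 := by
    rintro rfl
    exact not_common hβ (by simpa [hββ'] using hβ') hγβ
  have hs : s < s' := by
    by_contra! h
    refine not_common ?_ hβ' hγβ'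
    rw [← sub_eq_of_eq_add hββ']
    exact sub_mem hβ (Submodule.smul_mem _ _ (F.antitone_even h he.mem))
  have ht : t < t' := by
    by_contra! h
    refine not_common hβ ?_ hγβ
    rw [hββ']
    exact add_mem hβ' (Submodule.smul_mem _ _ (F.antitone_odd h ho.mem))
  exact ⟨hs, ht, β, β', exists_adapted_basis hα hker he ho hs ht hδ0 hβ hβ' hγβ' hββ'⟩

lemma exists_lift_or_exists_adapted_basis_of_exact {U W : Type*} [AddCommGroup U] [Module K U]
    [AddCommGroup W] [Module K W] {FU : Bifiltration K U n} {FW : Bifiltration K W n}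
    {ι : U →ₗ[K] V} {π : V →ₗ[K] W} (hinj : Function.Injective ι) (hιπ : Function.Exact ι π)
    (hιeven : ∀ p, (FU.even p).map ι = F.even p ⊓ LinearMap.ker π)
    (hιodd : ∀ p, (FU.odd p).map ι = F.odd p ⊓ LinearMap.ker π)
    (hπeven : ∀ p, (F.even p).map π = FW.even p) (hπodd : ∀ p, (F.odd p).map π = FW.odd p)
    {u : U} {φ : U →ₗ[K] K} (hu : FU.IsAdapted u φ s t) (hφ : LinearMap.ker φ = ⊥)
    {w : W} {ψ : W →ₗ[K] K} (hw : FW.IsAdapted w ψ s' t') (hψ : LinearMap.ker ψ = ⊥) :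
    (∃ β, F.IsAdapted β (ψ ∘ₗ π) s' t') ∨
    s < s' ∧ t < t' ∧ ∃ β β' φ φ', F.IsAdapted β φ s' t ∧ F.IsAdapted β' φ' s t' ∧
      φ β' = 0 ∧ φ' β = 0 ∧ Disjoint (LinearMap.ker φ) (LinearMap.ker φ') := by
  refine exists_lift_or_exists_adapted_basis (α := ι u) ?_ ?_
    (extendsAt_of_map_eq hιeven hπeven hu.mem_even hu.even_le_ker hφ
      hw.mem_even hw.apply_eq_one hw.even_le_ker hψ)
    (extendsAt_of_map_eq hιodd hπodd hu.mem_odd hu.odd_le_ker hφ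
      hw.mem_odd hw.apply_eq_one hw.odd_le_ker hψ)
  · rw [map_ne_zero_iff ι hinj]
    rintro rfl
    exact hu.notMem_ker (zero_mem _)
  · rw [LinearMap.ker_comp_of_ker_eq_bot π hψ, LinearMap.exact_iff.1 hιπ,
      ← Submodule.map_top, ← hu.span_eq_top hφ, Submodule.map_span, Set.image_singleton]

end Bifiltration

end LinearAlgebra

section Monomials

variable {K : Type} [Field K]

lemma mem_homogSet_iff {m : ℤ} {f : RatFunc K} :
    f ∈ homogSet K m ↔ f ∈ K ∙ (RatFunc.X : RatFunc K) ^ m := by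
  simp only [homogSet, Set.mem_ofPred_eq, Submodule.mem_span_singleton, Algebra.smul_def, eq_comm]

lemma mem_xPow_iff {c : ℤ} {f : RatFunc K} :
    f ∈ xPow K c ↔ f ∈ K[X] ∙ (RatFunc.X : RatFunc K) ^ c := by
  simp only [xPow, Set.mem_ofPred_eq, Submodule.mem_span_singleton, Algebra.smul_def, eq_comm,
    mul_comm]

lemma smul_X_zpow_mem_homogSet (a : K) (m : ℤ) : a • (RatFunc.X : RatFunc K) ^ m ∈ homogSet K m :=
  mem_homogSet_iff.2 (Submodule.smul_mem _ _ (Submodule.mem_span_singleton_self _))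

lemma homogSet_subset_xPow {c m : ℤ} (h : c ≤ m) : homogSet K m ⊆ xPow K c := by
  rintro _ ⟨a, rfl⟩
  refine ⟨monomial (m - c).toNat a, ?_⟩
  rw [RatFunc.algebraMap_monomial, ← RatFunc.algebraMap_eq_C, mul_left_comm, ← zpow_natCast,
    ← zpow_add₀ RatFunc.X_ne_zero, Int.toNat_of_nonneg (by omega), add_sub_cancel]

lemma xPow_antitone : Antitone (xPow K) := fun c d h f hf => by
  rw [mem_xPow_iff] at hf ⊢
  refine (Submodule.span_singleton_le_iff_mem _ _).2 ?_ hf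
  exact mem_xPow_iff.1 (homogSet_subset_xPow h ⟨1, by simp⟩)

lemma mul_mem_xPow {c d : ℤ} {p q : RatFunc K} (hp : p ∈ xPow K c) (hq : q ∈ xPow K d) :
    p * q ∈ xPow K (c + d) := by
  obtain ⟨a, rfl⟩ := hp
  obtain ⟨b, rfl⟩ := hq
  exact ⟨a * b, by rw [map_mul, zpow_add₀ RatFunc.X_ne_zero]; ring⟩

lemma algebraMap_mem_xPow {c : ℤ} (hc : c ≤ 0) (p : K[X]) :
    algebraMap K[X] (RatFunc K) p ∈ xPow K c :=
  xPow_antitone hc ⟨p, by simp⟩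

lemma xPow_induction {c : ℤ} {P : RatFunc K → Prop}
    (add : ∀ p q, P p → P q → P (p + q))
    (smul_zpow : ∀ (m : ℤ) (a : K), c ≤ m → P (a • RatFunc.X ^ m)) {f : RatFunc K}
    (hf : f ∈ xPow K c) : P f := by
  obtain ⟨p, rfl⟩ := hf
  induction p using Polynomial.induction_on' with
  | add p q hp hq => rw [map_add, mul_add]; exact add _ _ hp hq
  | monomial k a =>
    convert smul_zpow (c + k) a (by omega) using 1
    rw [RatFunc.algebraMap_monomial, RatFunc.smul_eq_C_mul, zpow_add₀ RatFunc.X_ne_zero,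
      zpow_natCast, mul_left_comm]

open scoped RatFunc in
/-- The coefficient of `x^j` in the Laurent expansion at `0`. -/
def laurentCoeff (j : ℤ) : RatFunc K →+ K where
  toFun f := (algebraMap (RatFunc K) (LaurentSeries K) f).coeff j
  map_zero' := by simp
  map_add' := by simp

open scoped RatFunc in
lemma laurentCoeff_smul_X_zpow (j m : ℤ) (a : K) :
    laurentCoeff j (a • (RatFunc.X : RatFunc K) ^ m) = if j = m then a else 0 := by
  have hC : algebraMap (RatFunc K) (LaurentSeries K) (RatFunc.C a) = HahnSeries.C a := by
    rw [← PowerSeries.coe_C, ← Polynomial.coe_C, RatFunc.coe_coe]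
    exact congrArg _ (RatFunc.algebraMap_C a).symm
  change (algebraMap (RatFunc K) (LaurentSeries K) (a • RatFunc.X ^ m)).coeff j = _
  rw [RatFunc.smul_eq_C_mul, map_mul, map_zpow₀, RatFunc.coe_X, ← RatFunc.single_zpow, hC]
  simp [HahnSeries.C_apply, HahnSeries.coeff_single]

end Monomials

section Grading

variable {K : Type} [Field K] {n : ℕ}

/-- The homogeneous elements of degree `m` of a subalgebra of `M_n(K(x))`, as an additive
subgroup, so that graded modules fit Mathlib's `SetLike.GradedSMul`. -/
def homogeneousPart (Λ : Subalgebra K[X] (Matrix (Fin n) (Fin n) (RatFunc K))) (m : ℤ) :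
    AddSubgroup Λ where
  carrier := {u | LambdaDeg Λ u m}
  add_mem' hu hv i j :=
    mem_homogSet_iff.2 (add_mem (mem_homogSet_iff.1 (hu i j)) (mem_homogSet_iff.1 (hv i j)))
  zero_mem' _ _ := mem_homogSet_iff.2 (zero_mem _)
  neg_mem' hu i j := mem_homogSet_iff.2 (neg_mem (mem_homogSet_iff.1 (hu i j)))

variable {Λ : Subalgebra K[X] (Matrix (Fin n) (Fin n) (RatFunc K))}

lemma algebraMap_monomial_mem_homogeneousPart (k : ℕ) (a : K) :
    algebraMap K[X] Λ (monomial k a) ∈ homogeneousPart Λ k := by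
  intro i j
  rw [Subalgebra.coe_algebraMap, Matrix.algebraMap_matrix_apply]
  split_ifs
  · rw [RatFunc.algebraMap_monomial, ← RatFunc.smul_eq_C_mul, ← zpow_natCast]
    exact smul_X_zpow_mem_homogSet a k
  · exact mem_homogSet_iff.2 (zero_mem _)

variable {M N : Type*} [AddCommGroup M] [Module Λ M] [AddCommGroup N] [Module Λ N]
  {g : ℤ → AddSubgroup M} {h : ℤ → AddSubgroup N}

lemma IsModGrading.gradedSMul (hg : IsModGrading Λ M g) :
    SetLike.GradedSMul (homogeneousPart Λ) g :=
  ⟨fun r m _ _ hu ha => hg.2 r m _ hu _ ha⟩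

lemma smul_mem_graded [SetLike.GradedSMul (homogeneousPart Λ) g] {r m k : ℤ} {u : Λ}
    (hu : u ∈ homogeneousPart Λ r) {a : M} (ha : a ∈ g m) (hk : r + m = k) : u • a ∈ g k :=
  hk ▸ SetLike.GradedSMul.smul_mem hu ha

variable (Λ) in
lemma X_smul_mem_graded [Module K[X] M] [IsScalarTower K[X] Λ M]
    [SetLike.GradedSMul (homogeneousPart Λ) g] {m : ℤ} {a : M} (ha : a ∈ g m) :
    (X : K[X]) • a ∈ g (1 + m) := by
  rw [← algebraMap_smul Λ, ← monomial_one_one_eq_X]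
  exact smul_mem_graded (algebraMap_monomial_mem_homogeneousPart 1 1) ha rfl

variable [Decomposition g] [Decomposition h]

lemma mem_of_decompose_eq_zero {m : ℤ} {a : M}
    (ha : ∀ k ≠ m, (decompose g a k : M) = 0) : a ∈ g m := by
  classical
  rw [← sum_support_decompose g a]
  refine sum_mem fun k _ => ?_
  obtain rfl | hk := eq_or_ne k m
  · exact (decompose g a k).2
  · rw [ha k hk]
    exact zero_mem _

lemma eq_zero_of_decompose_eq_zero {a : M} (ha : ∀ k, (decompose g a k : M) = 0) : a = 0 :=
  (decompose g).injective <| by ext k; simp [ha k]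

lemma decompose_map_of_degree {r : ℤ} {f : M →+ N} (hf : ∀ m, ∀ a ∈ g m, f a ∈ h (r + m)) (a : M)
    (m : ℤ) : (decompose h (f a) m : N) = f (decompose g a (m - r)) := by
  induction a using Decomposition.inductionOn g with
  | zero => simp
  | @homogeneous k a =>
    obtain rfl | hk := eq_or_ne k (m - r)
    · rw [decompose_of_mem_same g a.2, decompose_of_mem_same h]
      simpa using hf _ _ a.2
    · rw [decompose_of_mem_ne g a.2 hk, map_zero, decompose_of_mem_ne h (hf _ _ a.2) (by omega)]
  | add a b ha hb =>
    simp only [map_add, decompose_add, DirectSum.add_apply, AddMemClass.coe_add, ha, hb]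

lemma decompose_map {f : M →+ N} (hf : ∀ m, ∀ a ∈ g m, f a ∈ h m) (a : M) (m : ℤ) :
    (decompose h (f a) m : N) = f (decompose g a m) := by
  rw [decompose_map_of_degree (r := 0) (by simpa only [zero_add] using hf), sub_zero]

lemma mem_iff_map_mem {f : M →+ N} (hf : ∀ m, ∀ a ∈ g m, f a ∈ h m) {S : AddSubgroup M}
    (hS : ∀ a ∈ S, ∀ m, (decompose g a m : M) ∈ S) (hinj : ∀ a ∈ S, f a = 0 → a = 0) {m : ℤ}
    {a : M} (ha : a ∈ S) : a ∈ g m ↔ f a ∈ h m := by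
  refine ⟨hf m a, fun hfa => mem_of_decompose_eq_zero fun k hk => hinj _ (hS a ha k) ?_⟩
  rw [← decompose_map hf, decompose_of_mem_ne h hfa hk.symm]

lemma isGradedSubmodule_of_decompose_mem {S : Submodule Λ M}
    (hS : ∀ a ∈ S, ∀ m, (decompose g a m : M) ∈ S) : IsGradedSubmodule Λ g S := by
  classical
  intro a ha
  rw [← sum_support_decompose g a]
  exact sum_mem fun m _ => Submodule.subset_span
    ⟨hS a ha m, Set.mem_iUnion.2 ⟨m, (decompose g a m).2⟩⟩

lemma decompose_smul_of_mem [SetLike.GradedSMul (homogeneousPart Λ) g] {r : ℤ} {u : Λ}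
    (hu : u ∈ homogeneousPart Λ r) (a : M) (m : ℤ) :
    (decompose g (u • a) m : M) = u • (decompose g a (m - r) : M) :=
  decompose_map_of_degree (f := DistribSMul.toAddMonoidHom M u)
    (fun _ _ ha => smul_mem_graded hu ha rfl) a m

lemma eq_zero_of_X_sub_one_smul_mem [Module K[X] M]
    (hX : ∀ m, ∀ a ∈ g m, (X : K[X]) • a ∈ g (1 + m)) (htf : ∀ a : M, (X : K[X]) • a = 0 → a = 0)
    {m : ℤ} {c : M} (hc : (X - 1 : K[X]) • c ∈ g m) : c = 0 := by
  classical
  have shift {k l : ℤ} (hkl : l - 1 = k) (hl : l ≠ m) :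
      (X : K[X]) • (decompose g c k : M) = decompose g c l := by
    subst hkl
    rw [← sub_eq_zero, ← decompose_of_mem_ne g hc hl.symm, sub_smul, one_smul,
      DirectSum.decompose_sub, DirectSum.sub_apply, AddSubgroupClass.coe_sub]
    exact congrArg (· - _) (decompose_map_of_degree
      (f := DistribSMul.toAddMonoidHom M (X : K[X])) hX c l).symm
  by_contra hc0
  have hne : (decompose g c).support.Nonempty := by
    rw [Finset.nonempty_iff_ne_empty, Ne, DFinsupp.support_eq_empty]
    exact fun h => hc0 ((decompose g).injective (h.trans (DirectSum.decompose_zero g).symm))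
  set top := (decompose g c).support.max' hne
  set bot := (decompose g c).support.min' hne
  have htop : top + 1 = m := by
    by_contra h
    refine (ZeroMemClass.coe_eq_zero.not.2 <|
      DFinsupp.mem_support_iff.1 <| Finset.max'_mem _ hne) (htf (decompose g c top : M) ?_)
    have : top + 1 ∉ (decompose g c).support :=
      fun h => (lt_add_one top).not_ge (Finset.le_max' _ _ h)
    simpa [DFinsupp.notMem_support_iff.1 this] using shift (add_sub_cancel_right top 1) h
  have hbot : bot = m := by
    by_contra h
    refine DFinsupp.mem_support_iff.1 (Finset.min'_mem _ hne) (Subtype.ext ?_)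
    have : bot - 1 ∉ (decompose g c).support :=
      fun h => (sub_one_lt bot).not_ge (Finset.min'_le _ _ h)
    simpa [DFinsupp.notMem_support_iff.1 this] using (shift rfl h).symm
  have : bot ≤ top := Finset.min'_le_max' _ hne
  omega

lemma exists_forall_lt_eq_bot_of_finite [Module K[X] M] [Module.Finite K[X] M]
    (hmon : ∀ (k : ℕ) (c : K) (m : ℤ), ∀ a ∈ g m, monomial k c • a ∈ g (k + m)) :
    ∃ m₀, ∀ m < m₀, g m = ⊥ := by
  classical
  obtain ⟨S, hS⟩ := Module.Finite.fg_top (R := K[X]) (M := M)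
  obtain ⟨m₀, hm₀⟩ := (S.biUnion fun a => (decompose g a).support).bddBelow
  let above : Submodule K[X] M :=
    { carrier := {a | ∀ m < m₀, decompose g a m = 0}
      add_mem' := fun ha hb m hm => by simp [ha m hm, hb m hm]
      zero_mem' := by simp
      smul_mem' := fun p a ha m hm => by
        induction p using Polynomial.induction_on' with
        | add p q hp hq => simp [add_smul, hp, hq]
        | monomial k c =>
          refine Subtype.ext ((decompose_map_of_degree
            (f := DistribSMul.toAddMonoidHom M (monomial k c)) (hmon k c) a m).trans ?_)
          simp [ha (m - k) (by omega)] }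
  have htop : ⊤ ≤ above := by
    rw [← hS, Submodule.span_le]
    intro a ha m hm
    by_contra h
    exact hm.not_ge (hm₀ (Finset.mem_biUnion.2 ⟨a, ha, DFinsupp.mem_support_iff.2 h⟩))
  refine ⟨m₀, fun m hm => (AddSubgroup.eq_bot_iff_forall _).2 fun a ha => ?_⟩
  rw [← decompose_of_mem_same g ha, htop (Submodule.mem_top (x := a)) m hm, ZeroMemClass.coe_zero]

omit [Decomposition g] in
lemma IsModGrading.exists_forall_lt_eq_bot (hg : IsModGrading Λ M g) [Module K[X] M]
    [IsScalarTower K[X] Λ M] [Module.Finite K[X] M] : ∃ m₀, ∀ m < m₀, g m = ⊥ := by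
  have := hg.1.chooseDecomposition
  refine exists_forall_lt_eq_bot_of_finite (K := K) fun k c m a ha => ?_
  simpa only [algebraMap_smul] using
    hg.2 k m _ (algebraMap_monomial_mem_homogeneousPart k c) a ha

end Grading

section Exponents

variable {n : ℕ}

lemma cExp_le_two (i j : Fin n) : cExp n i j ≤ 2 := by
  unfold cExp
  split_ifs <;> omega

variable [n.AtLeastTwo]

lemma cExp_self (i : Fin n) : cExp n i i = 0 := by
  have := Nat.AtLeastTwo.prop (n := n)
  unfold cExp
  split_ifs <;> omega

lemma cExp_zero_le (j : Fin n) : cExp n 0 j ≤ 0 := by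
  have : ((0 : Fin n) : ℕ) = 0 := rfl
  unfold cExp
  split_ifs <;> omega

lemma cExp_triangle (i j k : Fin n) : cExp n i k ≤ cExp n i j + cExp n j k := by
  have := Nat.AtLeastTwo.prop (n := n)
  unfold cExp
  split_ifs <;> omega

/-- The row of the `p`-th step of the filtrations of the fibre: positions are 1-based and rows are
0-based, so that `p = n * turn + row + 1`. -/
def rowOf (n : ℕ) [NeZero n] (p : ℤ) : Fin n :=
  ⟨((p - 1) % n).toNat, by
    have := Int.emod_nonneg (p - 1) (NeZero.ne (n : ℤ))
    have := Int.emod_lt_of_pos (p - 1) (Int.natCast_pos.2 (NeZero.pos n))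
    omega⟩

/-- The number of full periods before position `p`. -/
def turnOf (n : ℕ) (p : ℤ) : ℤ := (p - 1) / n

lemma turnOf_add_rowOf (p : ℤ) : n * turnOf n p + (rowOf n p : ℕ) + 1 = p := by
  have := Int.emod_nonneg (p - 1) (NeZero.ne (n : ℤ))
  have := Int.mul_ediv_add_emod (p - 1) n
  simp only [turnOf, rowOf]
  omega

lemma rres_eq (p : ℤ) : rres n p = (rowOf n p : ℕ) + 1 := by
  have := Int.emod_nonneg (p - 1) (NeZero.ne (n : ℤ))
  simp only [rres, rowOf]
  omega

lemma sub_rres_div (p : ℤ) : (p - rres n p) / n = turnOf n p := by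
  have h : p - rres n p = n * turnOf n p := by
    have := turnOf_add_rowOf (n := n) p
    rw [rres_eq]
    omega
  rw [h, Int.mul_ediv_cancel_left _ (NeZero.ne (n : ℤ))]

lemma turnOf_eq_rowOf_eq {p k : ℤ} {i : Fin n} (h : n * k + (i : ℕ) + 1 = p) :
    turnOf n p = k ∧ rowOf n p = i := by
  have hi : ((i : ℕ) : ℤ) < n := by exact_mod_cast i.2
  obtain ⟨hk, hi'⟩ := (Int.ediv_emod_unique (a := p - 1) (q := k) (r := (i : ℕ))
    (Int.natCast_pos.2 (NeZero.pos n))).2 ⟨by omega, by omega, hi⟩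
  exact ⟨hk, Fin.ext (by simp only [rowOf]; omega)⟩

lemma le_iff_turnOf_rowOf {p q : ℤ} :
    p ≤ q ↔ turnOf n p < turnOf n q ∨ turnOf n p = turnOf n q ∧ rowOf n p ≤ rowOf n q := by
  have hp := turnOf_add_rowOf (n := n) p
  have hq := turnOf_add_rowOf (n := n) q
  have := (rowOf n p).2
  have := (rowOf n q).2
  rw [Fin.le_def]
  rcases lt_trichotomy (turnOf n p) (turnOf n q) with h | h | h
  · have : (n : ℤ) * (turnOf n p + 1) ≤ n * turnOf n q := by gcongr; omega
    rw [mul_add] at this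
    omega
  · rw [h] at hp ⊢
    omega
  · have : (n : ℤ) * (turnOf n q + 1) ≤ n * turnOf n p := by gcongr; omega
    rw [mul_add] at this
    omega

lemma rowOf_add_one_or (p : ℤ) :
    (turnOf n (p + 1) = turnOf n p ∧ (rowOf n (p + 1) : ℕ) = rowOf n p + 1) ∨
      (turnOf n (p + 1) = turnOf n p + 1 ∧ (rowOf n (p + 1) : ℕ) = 0 ∧
        (rowOf n p : ℕ) = n - 1) := by
  have hp := turnOf_add_rowOf (n := n) p
  obtain h | h := (Nat.succ_le_of_lt (rowOf n p).2).lt_or_eq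
  · obtain ⟨ht, hr⟩ := turnOf_eq_rowOf_eq (p := p + 1) (k := turnOf n p)
      (i := ⟨rowOf n p + 1, h⟩) (by push_cast; omega)
    exact .inl ⟨ht, congrArg Fin.val hr⟩
  · obtain ⟨ht, hr⟩ := turnOf_eq_rowOf_eq (p := p + 1) (k := turnOf n p + 1) (i := (0 : Fin n))
      (by rw [mul_add, Fin.val_zero]; omega)
    exact .inr ⟨ht, congrArg Fin.val hr, by omega⟩

/-- The degree of the `p`-th step of the even filtration of the fibre; the step of the odd
filtration at the same position has degree one more. -/
def degOf (n : ℕ) (p : ℤ) : ℤ := -2 * turnOf n p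

lemma degOf_add_cExp_le {p q : ℤ} (h : p ≤ q) :
    degOf n q + cExp n (rowOf n p) (rowOf n q) ≤ degOf n p := by
  obtain h | ⟨h, hr⟩ := (le_iff_turnOf_rowOf (n := n)).1 h
  · have := cExp_le_two (rowOf n p) (rowOf n q)
    simp only [degOf]
    omega
  · rw [Fin.le_def] at hr
    simp only [degOf, h, cExp]
    split_ifs <;> omega

lemma degOf_add_cExp_succ_le (p : ℤ) :
    degOf n p + cExp n (rowOf n (p + 1)) (rowOf n p) ≤ degOf n (p + 1) + 1 := by
  simp only [degOf, cExp]
  obtain ⟨ht, hr⟩ | ⟨ht, hr, hr'⟩ := rowOf_add_one_or (n := n) p <;> split_ifs <;> omega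

lemma rowOf_sub_self (p : ℤ) : rowOf n (p - n) = rowOf n p := by
  have := turnOf_add_rowOf (n := n) p
  exact (turnOf_eq_rowOf_eq (k := turnOf n p - 1) (by rw [mul_sub]; omega)).2

lemma degOf_sub_self (p : ℤ) : degOf n (p - n) = degOf n p + 2 := by
  have := turnOf_add_rowOf (n := n) p
  rw [degOf, degOf, (turnOf_eq_rowOf_eq (p := p - n) (k := turnOf n p - 1) (i := rowOf n p)
    (by rw [mul_sub]; omega)).1]
  ring

lemma exists_rowOf_eq_degOf_eq (l : Fin n) (m : ℤ) :
    ∃ p, rowOf n p = l ∧ (degOf n p = m ∨ degOf n p + 1 = m) := by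
  obtain ⟨ht, hr⟩ := turnOf_eq_rowOf_eq (n := n) (k := -(m / 2)) (i := l) rfl
  refine ⟨_, hr, ?_⟩
  rw [degOf, ht]
  omega

lemma turnOf_cases {s t : ℤ} (hst : s < t) (hts : t < s + n) :
    (turnOf n t = turnOf n s ∧ (rowOf n s : ℕ) < rowOf n t) ∨
      (turnOf n t = turnOf n s + 1 ∧ (rowOf n t : ℕ) < rowOf n s) := by
  have hst := (not_congr (le_iff_turnOf_rowOf (n := n))).1 hst.not_ge
  have hts : ¬ s ≤ t - n := by omega
  rw [le_iff_turnOf_rowOf (n := n), rowOf_sub_self] at hts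
  have := degOf_sub_self (n := n) t
  simp only [degOf] at this
  rw [Fin.le_def] at hst hts
  omega

lemma baseIdx_eq (s t : ℤ) :
    baseIdx n s t = if rowOf n s < rowOf n t then
      ((rowOf n s : ℕ) + 1, (rowOf n t : ℕ) + 1, 2 * turnOf n s)
    else ((rowOf n t : ℕ) + 1, (rowOf n s : ℕ) + 1, 2 * turnOf n s + 1) := by
  have hlt : rres n s < rres n t ↔ rowOf n s < rowOf n t := by
    rw [rres_eq, rres_eq, Fin.lt_def]
    omega
  have hnat (p : ℤ) : (rres n p).toNat = (rowOf n p : ℕ) + 1 := by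
    rw [rres_eq]
    omega
  simp only [baseIdx, sub_rres_div, hlt, hnat]

/-- In row `l` and degree `m`, the extended module `(s, t)` sees the even filtration up to
position `s` and the odd one up to position `t`. -/
lemma baseIdx_spec {s t : ℤ} (hst : s < t) (hts : t < s + n) {i j : ℕ} {σ : ℤ}
    (h : baseIdx n s t = (i, j, σ)) :
    (1 ≤ i ∧ i < j ∧ j ≤ n) ∧
    ∀ p, (dExp i j (rowOf n p) ≤ σ + degOf n p ↔ p ≤ s) ∧
      (dExp i j (rowOf n p) ≤ σ + (degOf n p + 1) ↔ p ≤ t) := by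
  have hs := (rowOf n s).2
  have ht := (rowOf n t).2
  rw [baseIdx_eq] at h
  obtain ⟨hturn, hrow⟩ | ⟨hturn, hrow⟩ := turnOf_cases hst hts
  · rw [if_pos (Fin.lt_def.2 hrow)] at h
    obtain ⟨rfl, rfl, rfl⟩ := by simpa only [Prod.mk.injEq] using h
    refine ⟨⟨by omega, by omega, by omega⟩, fun p => ?_⟩
    rw [le_iff_turnOf_rowOf (n := n) (q := s), le_iff_turnOf_rowOf (n := n) (q := t), Fin.le_def,
      Fin.le_def]
    simp only [dExp, degOf]
    constructor <;> split_ifs <;> omega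
  · rw [if_neg (Fin.lt_def.not.2 hrow.not_gt)] at h
    obtain ⟨rfl, rfl, rfl⟩ := by simpa only [Prod.mk.injEq] using h
    refine ⟨⟨by omega, by omega, by omega⟩, fun p => ?_⟩
    rw [le_iff_turnOf_rowOf (n := n) (q := s), le_iff_turnOf_rowOf (n := n) (q := t), Fin.le_def,
      Fin.le_def]
    simp only [dExp, degOf]
    constructor <;> split_ifs <;> omega

end Exponents

section TiledOrder

variable (K : Type) [Field K] (n : ℕ) [n.AtLeastTwo]

/-- The tiled order `Λ`, whose `(i, j)` entries lie in `x ^ c_{ij} K[x]`. -/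
def tiledOrder : Subalgebra K[X] (Matrix (Fin n) (Fin n) (RatFunc K)) where
  carrier := lambdaCarrier K n
  mul_mem' hA hB i k := by
    rw [Matrix.mul_apply, mem_xPow_iff]
    exact sum_mem fun j _ => mem_xPow_iff.1 <|
      xPow_antitone (cExp_triangle i j k) (mul_mem_xPow (hA i j) (hB j k))
  add_mem' hA hB i j :=
    mem_xPow_iff.2 (add_mem (mem_xPow_iff.1 (hA i j)) (mem_xPow_iff.1 (hB i j)))
  algebraMap_mem' p i j := by
    rw [Matrix.algebraMap_matrix_apply]
    split_ifs with h
    · subst h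
      exact algebraMap_mem_xPow (cExp_self i).le p
    · exact mem_xPow_iff.2 (zero_mem _)

variable {K n}

/-- The element `c x^r e_{ij}` of the tiled order. -/
def matMonomial (i j : Fin n) (r : ℤ) (h : cExp n i j ≤ r) (c : K) : tiledOrder K n :=
  ⟨Matrix.single i j (c • RatFunc.X ^ r), fun k l => by
    rw [Matrix.single_apply]
    split_ifs with hkl
    · obtain ⟨rfl, rfl⟩ := hkl
      exact homogSet_subset_xPow h (smul_X_zpow_mem_homogSet c r)
    · exact mem_xPow_iff.2 (zero_mem _)⟩

lemma coe_matMonomial {i j : Fin n} {r : ℤ} (h : cExp n i j ≤ r) (c : K) :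
    (matMonomial i j r h c : Matrix (Fin n) (Fin n) (RatFunc K)) =
      Matrix.single i j (c • RatFunc.X ^ r) :=
  rfl

lemma matMonomial_mem_homogeneousPart {i j : Fin n} {r : ℤ} (h : cExp n i j ≤ r) (c : K) :
    matMonomial i j r h c ∈ homogeneousPart (tiledOrder K n) r := by
  intro k l
  rw [coe_matMonomial, Matrix.single_apply]
  split_ifs
  · exact smul_X_zpow_mem_homogSet c r
  · exact mem_homogSet_iff.2 (zero_mem _)

lemma matMonomial_mul_matMonomial {i j k : Fin n} {r s t : ℤ} (h : cExp n i j ≤ r)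
    (h' : cExp n j k ≤ s) (ht : r + s = t) (h'' : cExp n i k ≤ t) (c d : K) :
    matMonomial i j r h c * matMonomial j k s h' d = matMonomial i k t h'' (c * d) := by
  refine Subtype.ext ((Matrix.single_mul_single_same ..).trans ?_)
  rw [smul_mul_smul_comm, ← zpow_add₀ RatFunc.X_ne_zero, ht]
  rfl

lemma matMonomial_mul_matMonomial_of_ne {i j j' k : Fin n} {r s : ℤ} (h : cExp n i j ≤ r)
    (h' : cExp n j' k ≤ s) (hj : j ≠ j') (c d : K) :
    matMonomial i j r h c * matMonomial j' k s h' d = 0 :=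
  Subtype.ext (Matrix.single_mul_single_of_ne _ _ _ _ hj _)

lemma monomial_smul_matMonomial {i j : Fin n} {r t : ℤ} (h : cExp n i j ≤ r) (k : ℕ)
    (ht : r + k = t) (h' : cExp n i j ≤ t) (c d : K) :
    (monomial k c : K[X]) • matMonomial i j r h d = matMonomial i j t h' (c * d) := by
  refine Subtype.ext ((Matrix.smul_single ..).trans ?_)
  rw [Algebra.smul_def, RatFunc.algebraMap_monomial, ← RatFunc.smul_eq_C_mul, smul_mul_smul_comm,
    ← zpow_natCast, ← zpow_add₀ RatFunc.X_ne_zero, add_comm, ht]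
  rfl

lemma sum_matMonomial : ∑ i : Fin n, matMonomial i i 0 (cExp_self i).le (1 : K) = 1 := by
  refine Subtype.ext ?_
  simp only [AddSubmonoidClass.coe_finsetSum, coe_matMonomial, one_smul, zpow_zero]
  exact Matrix.sum_single_one

lemma tiledOrder_induction {P : tiledOrder K n → Prop} (zero : P 0)
    (add : ∀ u v, P u → P v → P (u + v))
    (matMonomial : ∀ i j r (h : cExp n i j ≤ r) c, P (matMonomial i j r h c))
    (u : tiledOrder K n) : P u := by
  have entry (i j : Fin n) : ∀ f ∈ xPow K (cExp n i j),
      ∃ v : tiledOrder K n, (v : Matrix _ _ _) = Matrix.single i j f ∧ P v := fun f hf =>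
    xPow_induction (P := fun f => ∃ v : tiledOrder K n, (v : Matrix _ _ _) = Matrix.single i j f ∧
        P v)
      (fun p q ⟨v, hv, hPv⟩ ⟨w, hw, hPw⟩ =>
        ⟨v + w, by simp [hv, hw, Matrix.single_add], add _ _ hPv hPw⟩)
      (fun r c h => ⟨_, rfl, matMonomial i j r h c⟩) hf
  choose v hv hPv using fun i j => entry i j _ (u.2 i j)
  have hu : u = ∑ i, ∑ j, v i j := Subtype.ext <| by
    rw [Matrix.matrix_eq_sum_single u.1]
    simp only [AddSubmonoidClass.coe_finsetSum, hv]
  have hsum {f : Fin n → tiledOrder K n} (hf : ∀ i, P (f i)) : P (∑ i, f i) :=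
    Finset.sum_induction f P add zero fun i _ => hf i
  rw [hu]
  exact hsum fun i => hsum fun j => hPv i j

end TiledOrder

section Fiber

variable (K : Type) [Field K] (n : ℕ) [n.AtLeastTwo]
variable (M : Type*) [AddCommGroup M] [Module (tiledOrder K n) M] [Module K[X] M]
  [IsScalarTower K[X] (tiledOrder K n) M]

/-- The elements of `M` whose first component vanishes in the fibre at `x = 1`. -/
def fiberRel : Submodule K[X] M :=
  (LinearMap.range (LinearMap.lsmul K[X] M (X - 1))).comap
    (Algebra.lsmul K[X] K[X] M (matMonomial (0 : Fin n) 0 0 (cExp_zero_le 0) (1 : K)))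

/-- The fibre at `x = 1` of the first component of `M`; multiplying by monomials identifies it
with the fibre at `x = 1` of every other component. -/
def Fiber : Type _ := M ⧸ fiberRel K n M

instance : AddCommGroup (Fiber K n M) := inferInstanceAs (AddCommGroup (M ⧸ fiberRel K n M))

instance : Module K[X] (Fiber K n M) := inferInstanceAs (Module K[X] (M ⧸ fiberRel K n M))

instance : Module K (Fiber K n M) := Module.compHom _ (algebraMap K K[X])

instance : IsScalarTower K K[X] (Fiber K n M) := IsScalarTower.of_compHom K K[X] _

variable {M} in
/-- The class in the fibre of an element of `M`. -/
def fiberMk : M →ₗ[K[X]] Fiber K n M := (fiberRel K n M).mkQ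

variable {n M}

/-- The class in the fibre of the `l`-th component of an element of `M`. -/
def fiberMap (l : Fin n) : M →ₗ[K[X]] Fiber K n M :=
  fiberMk K n ∘ₗ Algebra.lsmul K[X] K[X] M (matMonomial 0 l 0 (cExp_zero_le l) (1 : K))

variable {K}

lemma fiberMap_apply (l : Fin n) (a : M) :
    fiberMap K l a = fiberMk K n (matMonomial 0 l 0 (cExp_zero_le l) (1 : K) • a) :=
  rfl

lemma fiberMk_eq_zero_iff {a : M} : fiberMk K n a = 0 ↔
    ∃ c, (X - 1 : K[X]) • c = matMonomial (0 : Fin n) 0 0 (cExp_zero_le 0) (1 : K) • a :=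
  (Submodule.Quotient.mk_eq_zero _).trans Iff.rfl

lemma fiberMk_surjective : Function.Surjective (fiberMk K n : M →ₗ[K[X]] Fiber K n M) :=
  Submodule.mkQ_surjective _

lemma X_smul_fiber (v : Fiber K n M) : (X : K[X]) • v = v := by
  obtain ⟨a, rfl⟩ := fiberMk_surjective v
  rw [← sub_eq_zero, ← map_smul, ← map_sub, fiberMk_eq_zero_iff]
  exact ⟨matMonomial (0 : Fin n) 0 0 (cExp_zero_le 0) (1 : K) • a, by
    rw [sub_smul, one_smul, smul_sub, smul_comm]⟩

lemma monomial_smul_fiber (k : ℕ) (c : K) (v : Fiber K n M) :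
    (monomial k c : K[X]) • v = c • v := by
  have hpow : (X ^ k : K[X]) • v = v := by
    induction k with
    | zero => rw [pow_zero, one_smul]
    | succ k ih => rw [pow_succ, mul_smul, X_smul_fiber, ih]
  rw [← C_mul_X_pow_eq_monomial, mul_smul, hpow]
  rfl

lemma fiberMk_matMonomial_smul (l : Fin n) {r : ℤ} (h : cExp n 0 l ≤ r) (c : K) (a : M) :
    fiberMk K n (matMonomial 0 l r h c • a) = c • fiberMap K l a := by
  have scale {r s : ℤ} (hr : cExp n 0 l ≤ r) (hs : cExp n 0 l ≤ s) (k : ℕ) (hk : r + k = s)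
      (d e : K) : fiberMk K n (matMonomial 0 l s hs (d * e) • a) =
        d • fiberMk K n (matMonomial 0 l r hr e • a) := by
    rw [← monomial_smul_matMonomial hr k hk hs, smul_assoc, map_smul, monomial_smul_fiber]
  rw [fiberMap_apply]
  obtain hr | hr := le_total 0 r
  · simpa only [mul_one] using scale (cExp_zero_le l) h r.toNat (by omega) c 1
  · rw [← one_smul K (fiberMk K n (matMonomial 0 l r h c • a)),
      ← scale h (cExp_zero_le l) (-r).toNat (by omega), one_mul]
    simpa only [mul_one] using scale (cExp_zero_le l) (cExp_zero_le l) 0 (by simp) c 1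

lemma fiberMap_matMonomial_smul {i j : Fin n} {r : ℤ} (h : cExp n i j ≤ r) (c : K) (a : M) :
    fiberMap K i (matMonomial i j r h c • a) = c • fiberMap K j a := by
  have h' : cExp n 0 j ≤ r := by linarith [cExp_triangle 0 i j, cExp_zero_le i]
  rw [fiberMap_apply, smul_smul,
    matMonomial_mul_matMonomial (cExp_zero_le i) h (zero_add r) h', one_mul,
    fiberMk_matMonomial_smul]

lemma fiberMap_matMonomial_smul_of_ne {i j k : Fin n} {r : ℤ} (h : cExp n i j ≤ r) (c : K)
    (a : M) (hk : k ≠ i) : fiberMap K k (matMonomial i j r h c • a) = 0 := by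
  rw [fiberMap_apply, smul_smul, matMonomial_mul_matMonomial_of_ne _ _ hk, zero_smul, map_zero]

lemma fiberMap_zero_surjective :
    Function.Surjective (fiberMap K 0 : M →ₗ[K[X]] Fiber K n M) := by
  intro v
  obtain ⟨a, rfl⟩ := fiberMk_surjective v
  refine ⟨a, sub_eq_zero.1 ?_⟩
  rw [fiberMap_apply, ← map_sub, fiberMk_eq_zero_iff]
  refine ⟨0, ?_⟩
  rw [smul_zero, smul_sub, smul_smul,
    matMonomial_mul_matMonomial _ _ (add_zero 0) (cExp_zero_le 0), one_mul, sub_self]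

section Graded

variable (g : ℤ → AddSubgroup M) [SetLike.GradedSMul (homogeneousPart (tiledOrder K n)) g]

/-- The image in the fibre of the degree `m` part of the `l`-th component. -/
def fiberFilt (l : Fin n) (m : ℤ) : Submodule K (Fiber K n M) where
  carrier := fiberMap K l '' g m
  add_mem' := by
    rintro _ _ ⟨a, ha, rfl⟩ ⟨b, hb, rfl⟩
    exact ⟨a + b, add_mem ha hb, map_add ..⟩
  zero_mem' := ⟨0, zero_mem _, map_zero _⟩
  smul_mem' := by
    rintro c _ ⟨a, ha, rfl⟩
    exact ⟨matMonomial l l 0 (cExp_self l).le c • a,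
      smul_mem_graded (matMonomial_mem_homogeneousPart _ c) ha (zero_add m),
      fiberMap_matMonomial_smul ..⟩

variable {g}

lemma mem_fiberFilt {l : Fin n} {m : ℤ} {v : Fiber K n M} :
    v ∈ fiberFilt g l m ↔ ∃ a ∈ g m, fiberMap K l a = v :=
  Iff.rfl

lemma fiberFilt_le {i j : Fin n} {m s : ℤ} (h : m + cExp n i j ≤ s) :
    fiberFilt (K := K) g j m ≤ fiberFilt g i s := by
  rintro _ ⟨a, ha, rfl⟩
  have h' : cExp n i j ≤ s - m := by omega
  exact ⟨matMonomial i j (s - m) h' (1 : K) • a,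
    smul_mem_graded (matMonomial_mem_homogeneousPart h' 1) ha (sub_add_cancel s m),
    by rw [fiberMap_matMonomial_smul, one_smul]⟩

variable [Decomposition g]

lemma exists_mem_fiberFilt (v : Fiber K n M) : ∃ m, v ∈ fiberFilt g 0 m := by
  obtain ⟨a, rfl⟩ := fiberMap_zero_surjective v
  have mono {k m : ℤ} (h : k ≤ m) : fiberFilt (K := K) g (0 : Fin n) k ≤ fiberFilt g 0 m :=
    fiberFilt_le (by rw [cExp_self]; omega)
  induction a using Decomposition.inductionOn g with
  | zero => exact ⟨0, by simp⟩
  | @homogeneous m a => exact ⟨m, a, a.2, rfl⟩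
  | add a b ha hb =>
    obtain ⟨k, hk⟩ := ha
    obtain ⟨m, hm⟩ := hb
    exact ⟨max k m, by
      rw [map_add]
      exact add_mem (mono (le_max_left k m) hk) (mono (le_max_right k m) hm)⟩

lemma matMonomial_smul_eq_zero_of_fiberMap_eq_zero (htf : ∀ a : M, (X : K[X]) • a = 0 → a = 0)
    {l : Fin n} {m : ℤ} {a : M} (ha : a ∈ g m) (h : fiberMap K l a = 0) :
    matMonomial l l 0 (cExp_self l).le (1 : K) • a = 0 := by
  rw [fiberMap_apply, fiberMk_eq_zero_iff] at h
  obtain ⟨c, hc⟩ := h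
  rw [smul_smul, matMonomial_mul_matMonomial _ _ (add_zero 0) (cExp_zero_le l), one_mul] at hc
  have hc0 : c = 0 := eq_zero_of_X_sub_one_smul_mem
    (fun _ _ => X_smul_mem_graded (tiledOrder K n)) htf
    (hc ▸ smul_mem_graded (matMonomial_mem_homogeneousPart _ _) ha rfl)
  have hdiag : (X ^ 2 : K[X]) • matMonomial l l 0 (cExp_self l).le (1 : K) • a = 0 := by
    rw [← monomial_one_right_eq_X_pow, ← smul_assoc,
      monomial_smul_matMonomial _ 2 (t := 2) (by simp) (cExp_le_two l l),
      ← matMonomial_mul_matMonomial (cExp_le_two l 0) (cExp_zero_le l) (add_zero 2),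
      mul_smul, ← hc, hc0, smul_zero, smul_zero]
  rw [pow_two, mul_smul] at hdiag
  exact htf _ (htf _ hdiag)

lemma eq_zero_of_fiberMap_eq_zero (htf : ∀ a : M, (X : K[X]) • a = 0 → a = 0) {m : ℤ} {a : M}
    (ha : a ∈ g m) (h : ∀ l, fiberMap K (n := n) l a = 0) : a = 0 := by
  rw [← one_smul (tiledOrder K n) a, ← sum_matMonomial, Finset.sum_smul]
  exact Finset.sum_eq_zero fun l _ => matMonomial_smul_eq_zero_of_fiberMap_eq_zero htf ha (h l)

variable (K n g) in
omit [Decomposition g] in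
/-- The two interleaved filtrations of the fibre, formed by the images of all homogeneous parts
of all components of `M`. -/
def fiberBifiltration : Bifiltration K (Fiber K n M) n where
  even p := fiberFilt g (rowOf n p) (degOf n p)
  odd p := fiberFilt g (rowOf n p) (degOf n p + 1)
  antitone_even _ _ h := fiberFilt_le (degOf_add_cExp_le h)
  antitone_odd _ _ h := fiberFilt_le (by linarith [degOf_add_cExp_le (n := n) h])
  even_le_odd p := fiberFilt_le (degOf_add_cExp_succ_le p)
  odd_le_even p := fiberFilt_le (by
    rw [rowOf_sub_self, degOf_sub_self]
    linarith [degOf_add_cExp_succ_le (n := n) p])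

end Graded

end Fiber

section AdaptedPairs

variable {K : Type} [Field K] {n : ℕ} [n.AtLeastTwo]
variable {M : Type*} [AddCommGroup M] [Module (tiledOrder K n) M] [Module K[X] M]
  [IsScalarTower K[X] (tiledOrder K n) M]
variable {g : ℤ → AddSubgroup M} [SetLike.GradedSMul (homogeneousPart (tiledOrder K n)) g]

lemma exists_even_eq_bot (hbdd : ∃ m₀, ∀ m < m₀, g m = ⊥) :
    ∃ p, (fiberBifiltration K n g).even p = ⊥ := by
  obtain ⟨m₀, hm₀⟩ := hbdd
  obtain ⟨p, -, hp⟩ := exists_rowOf_eq_degOf_eq (0 : Fin n) (m₀ - 1)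
  refine ⟨p, (Submodule.eq_bot_iff _).2 ?_⟩
  rintro _ ⟨a, ha, rfl⟩
  rw [hm₀ _ (by omega)] at ha
  rw [(AddSubgroup.mem_bot).1 ha, map_zero]

variable [Decomposition g]

lemma exists_mem_even (v : Fiber K n M) : ∃ p, v ∈ (fiberBifiltration K n g).even p := by
  obtain ⟨m, hm⟩ := exists_mem_fiberFilt (g := g) v
  obtain ⟨p, hr, hp⟩ := exists_rowOf_eq_degOf_eq (0 : Fin n) (m + 1)
  exact ⟨p, fiberFilt_le (s := degOf n p) (by rw [hr, cExp_self]; omega) hm⟩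

lemma exists_even_ne_bot [Nontrivial M] (htf : ∀ a : M, (X : K[X]) • a = 0 → a = 0) :
    ∃ p, (fiberBifiltration K n g).even p ≠ ⊥ := by
  by_contra! hbot
  obtain ⟨a, ha⟩ := exists_ne (0 : M)
  refine ha (eq_zero_of_decompose_eq_zero (g := g) fun m =>
    eq_zero_of_fiberMap_eq_zero (K := K) (n := n) htf (decompose g a m).2 fun l => ?_)
  obtain ⟨p, hp⟩ := exists_mem_even (g := g) (fiberMap K l (decompose g a m : M))
  rwa [hbot, Submodule.mem_bot] at hp

namespace Bifiltration.IsAdapted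

variable {v : Fiber K n M} {φ : Fiber K n M →ₗ[K] K} {s t : ℤ} {i j : ℕ} {σ : ℤ}

omit [Decomposition g] in
lemma mem_fiberFilt (h : (fiberBifiltration K n g).IsAdapted v φ s t)
    (hij : baseIdx n s t = (i, j, σ)) {l : Fin n} {m : ℤ} (hd : dExp i j l ≤ σ + m) :
    v ∈ fiberFilt g l m := by
  obtain ⟨p, rfl, rfl | rfl⟩ := exists_rowOf_eq_degOf_eq l m
  · exact (fiberBifiltration K n g).antitone_even
      (((baseIdx_spec h.lt h.lt_add hij).2 p).1.1 hd) h.mem_even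
  · exact (fiberBifiltration K n g).antitone_odd
      (((baseIdx_spec h.lt h.lt_add hij).2 p).2.1 hd) h.mem_odd

omit [Decomposition g] in
lemma fiberFilt_le_ker (h : (fiberBifiltration K n g).IsAdapted v φ s t)
    (hij : baseIdx n s t = (i, j, σ)) {l : Fin n} {m : ℤ} (hd : σ + m < dExp i j l) :
    fiberFilt g l m ≤ LinearMap.ker φ := by
  obtain ⟨p, rfl, rfl | rfl⟩ := exists_rowOf_eq_degOf_eq l m
  · have hp := ((baseIdx_spec h.lt h.lt_add hij).2 p).1.not.1 hd.not_ge
    exact ((fiberBifiltration K n g).antitone_even (by omega)).trans h.even_le_ker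
  · have hp := ((baseIdx_spec h.lt h.lt_add hij).2 p).2.not.1 hd.not_ge
    exact ((fiberBifiltration K n g).antitone_odd (by omega)).trans h.odd_le_ker

end Bifiltration.IsAdapted

end AdaptedPairs

section FiberMaps

variable {K : Type} [Field K] {n : ℕ} [n.AtLeastTwo]
variable {A : Type*} [AddCommGroup A] [Module (tiledOrder K n) A] [Module K[X] A]
  [IsScalarTower K[X] (tiledOrder K n) A]
variable {B : Type*} [AddCommGroup B] [Module (tiledOrder K n) B] [Module K[X] B]
  [IsScalarTower K[X] (tiledOrder K n) B]
variable {C : Type*} [AddCommGroup C] [Module (tiledOrder K n) C] [Module K[X] C]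
  [IsScalarTower K[X] (tiledOrder K n) C]

/-- The linear map between fibres at `x = 1` induced by a homomorphism of modules. -/
def Fiber.map (f : A →ₗ[tiledOrder K n] B) : Fiber K n A →ₗ[K] Fiber K n B :=
  LinearMap.restrictScalars K (S := K[X]) (M := Fiber K n A) (M₂ := Fiber K n B) <|
    (fiberRel K n A).mapQ (fiberRel K n B) (f.restrictScalars K[X]) fun a ⟨c, hc⟩ =>
      ⟨f c, by
        simpa only [LinearMap.lsmul_apply, Algebra.lsmul_coe, map_smul, LinearMap.map_smul_of_tower,
          LinearMap.coe_restrictScalars] using congrArg f hc⟩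

lemma Fiber.map_fiberMap (f : A →ₗ[tiledOrder K n] B) (l : Fin n) (a : A) :
    Fiber.map f (fiberMap K l a) = fiberMap K l (f a) := by
  rw [fiberMap_apply l (f a), ← map_smul f]
  rfl

variable {gA : ℤ → AddSubgroup A} {gB : ℤ → AddSubgroup B} {gC : ℤ → AddSubgroup C}
variable {f : A →ₗ[tiledOrder K n] B} {g : B →ₗ[tiledOrder K n] C}

lemma Fiber.map_injective [Decomposition gC]
    [SetLike.GradedSMul (homogeneousPart (tiledOrder K n)) gC]
    (hf : Function.Injective f) (hfg : Function.Exact f g)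
    (htf : ∀ a : C, (X : K[X]) • a = 0 → a = 0) : Function.Injective (Fiber.map f) := by
  refine (injective_iff_map_eq_zero _).2 fun v hv => ?_
  obtain ⟨a, rfl⟩ := fiberMap_zero_surjective v
  rw [Fiber.map_fiberMap, fiberMap_apply, fiberMk_eq_zero_iff, ← map_smul, ← map_smul] at hv
  obtain ⟨b, hb⟩ := hv
  have hgb : g b = 0 := by
    refine eq_zero_of_X_sub_one_smul_mem (g := gC) (m := 0)
      (fun _ _ => X_smul_mem_graded (tiledOrder K n)) htf ?_
    rw [← LinearMap.map_smul_of_tower, hb, hfg.apply_apply_eq_zero]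
    exact zero_mem _
  obtain ⟨c, rfl⟩ := (hfg b).1 hgb
  rw [← LinearMap.map_smul_of_tower] at hb
  rw [fiberMap_apply, fiberMk_eq_zero_iff]
  exact ⟨c, hf hb⟩

variable [SetLike.GradedSMul (homogeneousPart (tiledOrder K n)) gB]

lemma map_fiberFilt_of_exact [SetLike.GradedSMul (homogeneousPart (tiledOrder K n)) gA]
    [SetLike.GradedSMul (homogeneousPart (tiledOrder K n)) gC]
    [Decomposition gA] [Decomposition gB] [Decomposition gC]
    (hf : Function.Injective f) (hfg : Function.Exact f g)
    (hfdeg : ∀ m, ∀ a ∈ gA m, f a ∈ gB m) (hgdeg : ∀ m, ∀ b ∈ gB m, g b ∈ gC m)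
    (htf : ∀ a : C, (X : K[X]) • a = 0 → a = 0) (l : Fin n) (m : ℤ) :
    (fiberFilt gA l m).map (Fiber.map f) = fiberFilt gB l m ⊓ LinearMap.ker (Fiber.map g) := by
  refine le_antisymm ?_ ?_
  · rintro _ ⟨_, ⟨a, ha, rfl⟩, rfl⟩
    refine ⟨⟨f a, hfdeg m a ha, (Fiber.map_fiberMap f l a).symm⟩, ?_⟩
    rw [SetLike.mem_coe, LinearMap.mem_ker, Fiber.map_fiberMap, Fiber.map_fiberMap,
      hfg.apply_apply_eq_zero, map_zero]
  · rintro _ ⟨⟨b, hb, rfl⟩, hker⟩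
    rw [SetLike.mem_coe, LinearMap.mem_ker, Fiber.map_fiberMap] at hker
    obtain ⟨a, ha⟩ := (hfg (matMonomial l l 0 (cExp_self l).le (1 : K) • b)).1 <| by
      rw [map_smul]
      exact matMonomial_smul_eq_zero_of_fiberMap_eq_zero htf (hgdeg m b hb) hker
    refine ⟨fiberMap K l a, ⟨a, ?_, rfl⟩, ?_⟩
    · refine (mem_iff_map_mem (f := f.toAddMonoidHom) (h := gB) hfdeg (S := ⊤) (by simp)
        (fun c _ hc => hf (hc.trans (map_zero f).symm)) trivial).2 ?_
      exact ha ▸ smul_mem_graded (matMonomial_mem_homogeneousPart _ _) hb (zero_add m)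
    · rw [Fiber.map_fiberMap, ha, fiberMap_matMonomial_smul, one_smul]

lemma map_fiberFilt_of_surjective [SetLike.GradedSMul (homogeneousPart (tiledOrder K n)) gC]
    [Decomposition gB] [Decomposition gC]
    (hg : Function.Surjective g) (hgdeg : ∀ m, ∀ b ∈ gB m, g b ∈ gC m) (l : Fin n) (m : ℤ) :
    (fiberFilt gB l m).map (Fiber.map g) = fiberFilt gC l m := by
  refine le_antisymm ?_ ?_
  · rintro _ ⟨_, ⟨b, hb, rfl⟩, rfl⟩
    exact ⟨g b, hgdeg m b hb, (Fiber.map_fiberMap g l b).symm⟩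
  · rintro _ ⟨c, hc, rfl⟩
    obtain ⟨b, rfl⟩ := hg c
    refine ⟨fiberMap K l (decompose gB b m : B), ⟨_, (decompose gB b m).2, rfl⟩, ?_⟩
    rw [Fiber.map_fiberMap]
    refine congrArg _ ((decompose_map (f := g.toAddMonoidHom) hgdeg b m).symm.trans ?_)
    exact decompose_of_mem_same gC hc

end FiberMaps

section Components

variable {K : Type} [Field K] {n : ℕ} [n.AtLeastTwo]
variable {M : Type*} [AddCommGroup M] [Module (tiledOrder K n) M] [Module K[X] M]
  [IsScalarTower K[X] (tiledOrder K n) M]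
variable (g : ℤ → AddSubgroup M) [SetLike.GradedSMul (homogeneousPart (tiledOrder K n)) g]
variable [Decomposition g]

/-- The graded submodule of the elements all of whose homogeneous components have their classes
in the subspace `W` of the fibre. -/
def fiberComap (W : Submodule K (Fiber K n M)) : Submodule (tiledOrder K n) M where
  carrier := {a | ∀ l m, fiberMap K l (decompose g a m : M) ∈ W}
  add_mem' ha hb l m := by
    rw [decompose_add, DirectSum.add_apply, AddMemClass.coe_add, map_add]
    exact add_mem (ha l m) (hb l m)
  zero_mem' l m := by simp
  smul_mem' u a ha := by
    induction u using tiledOrder_induction with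
    | zero => simp
    | add u v hu hv =>
      intro l m
      rw [add_smul, decompose_add, DirectSum.add_apply, AddMemClass.coe_add, map_add]
      exact add_mem (hu l m) (hv l m)
    | matMonomial i j r h c =>
      intro l m
      rw [decompose_smul_of_mem (matMonomial_mem_homogeneousPart h c)]
      obtain rfl | hl := eq_or_ne l i
      · rw [fiberMap_matMonomial_smul]
        exact W.smul_mem c (ha j _)
      · rw [fiberMap_matMonomial_smul_of_ne h c _ hl]
        exact W.zero_mem

variable {g} {W W' : Submodule K (Fiber K n M)}

lemma mem_fiberComap_of_mem {m : ℤ} {a : M} (ha : a ∈ g m) (h : ∀ l, fiberMap K l a ∈ W) :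
    a ∈ fiberComap g W := fun l k => by
  obtain rfl | hk := eq_or_ne k m
  · rw [decompose_of_mem_same g ha]
    exact h l
  · rw [decompose_of_mem_ne g ha hk.symm, map_zero]
    exact W.zero_mem

lemma decompose_mem_fiberComap {a : M} (ha : a ∈ fiberComap g W) (m : ℤ) :
    (decompose g a m : M) ∈ fiberComap g W :=
  mem_fiberComap_of_mem (decompose g a m).2 fun l => ha l m

lemma fiberComap_mono (h : W ≤ W') : fiberComap g W ≤ fiberComap g W' :=
  fun _ ha l m => h (ha l m)

lemma eq_bot_of_fiberComap_eq_bot (h : fiberComap g W = ⊥) : W = ⊥ := by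
  refine (Submodule.eq_bot_iff _).2 fun w hw => ?_
  obtain ⟨m, a, ha, rfl⟩ := exists_mem_fiberFilt (g := g) w
  have hmem : matMonomial (0 : Fin n) 0 0 (cExp_self 0).le (1 : K) • a ∈ fiberComap g W := by
    refine mem_fiberComap_of_mem
      (smul_mem_graded (matMonomial_mem_homogeneousPart _ _) ha (zero_add m)) fun l => ?_
    obtain rfl | hl := eq_or_ne l 0
    · rwa [fiberMap_matMonomial_smul, one_smul]
    · rw [fiberMap_matMonomial_smul_of_ne _ _ _ hl]
      exact W.zero_mem
  rw [h, Submodule.mem_bot] at hmem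
  rw [← one_smul K (fiberMap K 0 a), ← fiberMap_matMonomial_smul (cExp_self (0 : Fin n)).le,
    hmem, map_zero]

lemma disjoint_fiberComap (htf : ∀ a : M, (X : K[X]) • a = 0 → a = 0) (h : Disjoint W W') :
    Disjoint (fiberComap g W) (fiberComap g W') := by
  refine Submodule.disjoint_def.2 fun a ha ha' => ?_
  refine eq_zero_of_decompose_eq_zero (g := g) fun m => ?_
  exact eq_zero_of_fiberMap_eq_zero htf (decompose g a m).2 fun l =>
    Submodule.disjoint_def.1 h _ (ha l m) (ha' l m)

end Components

section Expansion

variable {K : Type} [Field K] {n : ℕ} [n.AtLeastTwo]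
variable {M : Type*} [AddCommGroup M] [Module (tiledOrder K n) M] [Module K[X] M]
  [IsScalarTower K[X] (tiledOrder K n) M]
variable (g : ℤ → AddSubgroup M) [Decomposition g]

/-- The additive map underlying `expand`. -/
def expandAddHom (φ : Fiber K n M →ₗ[K] K) (σ : ℤ) : M →+ (Fin n → RatFunc K) :=
  (DirectSum.toAddMonoid fun m : ℤ =>
    { toFun := fun (a : g m) l => φ (fiberMap K l (a : M)) • RatFunc.X ^ (σ + m)
      map_zero' := by ext; simp
      map_add' := fun a b => by ext; simp [add_smul] }).comp
    (DirectSum.decomposeAddEquiv g : M →+ _)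

variable {g}

lemma expandAddHom_of_mem (φ : Fiber K n M →ₗ[K] K) (σ : ℤ) {m : ℤ} {a : M} (ha : a ∈ g m) :
    expandAddHom g φ σ a = fun l => φ (fiberMap K l a) • RatFunc.X ^ (σ + m) := by
  simp [expandAddHom, DirectSum.decompose_of_mem g ha]

variable [SetLike.GradedSMul (homogeneousPart (tiledOrder K n)) g]

variable (g) in
/-- The map `M → K(x)^n` determined by a functional `φ` on the fibre: it sends an element `a` of
degree `m` to the vector with entries `φ(a_l) x^(σ + m)`. -/
def expand (φ : Fiber K n M →ₗ[K] K) (σ : ℤ) : M →ₗ[tiledOrder K n] (Fin n → RatFunc K) where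
  __ := expandAddHom g φ σ
  map_smul' u a := by
    change expandAddHom g φ σ (u • a) = u • expandAddHom g φ σ a
    induction u using tiledOrder_induction with
    | zero => simp
    | add u v hu hv => rw [add_smul, map_add, hu, hv, add_smul]
    | matMonomial i j r h c =>
      induction a using Decomposition.inductionOn g with
      | zero => simp
      | add a b ha hb => rw [smul_add, map_add, ha, hb, map_add, smul_add]
      | @homogeneous m a =>
        rw [expandAddHom_of_mem φ σ a.2, expandAddHom_of_mem φ σ
          (smul_mem_graded (matMonomial_mem_homogeneousPart h c) a.2 rfl)]
        change _ = Matrix.single i j (c • RatFunc.X ^ r) *ᵥ _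
        rw [Matrix.single_mulVec]
        ext k
        obtain rfl | hk := eq_or_ne k i
        · rw [fiberMap_matMonomial_smul, Function.update_self, smul_mul_smul_comm,
            ← zpow_add₀ RatFunc.X_ne_zero, map_smul, smul_eq_mul, add_left_comm]
        · rw [fiberMap_matMonomial_smul_of_ne h c _ hk, Function.update_of_ne hk, map_zero,
            zero_smul, Pi.zero_apply]

variable {φ φ' : Fiber K n M →ₗ[K] K} {σ : ℤ}

lemma expand_of_mem {m : ℤ} {a : M} (ha : a ∈ g m) (l : Fin n) :
    expand g φ σ a l = φ (fiberMap K l a) • RatFunc.X ^ (σ + m) :=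
  congrFun (expandAddHom_of_mem φ σ ha) l

lemma expand_mem_homogGroup {m : ℤ} {a : M} (ha : a ∈ g m) :
    expand g φ σ a ∈ homogGroup K n (σ + m) := fun l => by
  rw [expand_of_mem ha]
  exact smul_X_zpow_mem_homogSet _ _

lemma laurentCoeff_expand (a : M) (l : Fin n) (m : ℤ) :
    laurentCoeff (σ + m) (expand g φ σ a l) = φ (fiberMap K l (decompose g a m : M)) := by
  induction a using Decomposition.inductionOn g with
  | zero => simp
  | add a b ha hb =>
    simp only [map_add, Pi.add_apply, decompose_add, DirectSum.add_apply, AddMemClass.coe_add,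
      ha, hb]
  | @homogeneous k a =>
    rw [expand_of_mem a.2, laurentCoeff_smul_X_zpow]
    obtain rfl | hk := eq_or_ne m k
    · rw [if_pos rfl, decompose_of_mem_same g a.2]
    · rw [if_neg (by omega), decompose_of_mem_ne g a.2 hk.symm, map_zero, map_zero]

lemma ker_expand : LinearMap.ker (expand g φ σ) = fiberComap g (LinearMap.ker φ) := by
  classical
  ext a
  rw [LinearMap.mem_ker]
  refine ⟨fun ha l m => ?_, fun ha => ?_⟩
  · rw [LinearMap.mem_ker, ← laurentCoeff_expand (σ := σ), ha, Pi.zero_apply, map_zero]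
  · rw [← sum_support_decompose g a, map_sum]
    refine Finset.sum_eq_zero fun m _ => funext fun l => ?_
    rw [expand_of_mem (decompose g a m).2, LinearMap.mem_ker.1 (ha l m), zero_smul, Pi.zero_apply]

lemma fiberMap_decompose_mem_ker_of_expand_mem_homogGroup {a : M} {m k : ℤ}
    (ha : expand g φ σ a ∈ homogGroup K n (σ + m)) (hk : k ≠ m) (l : Fin n) :
    fiberMap K l (decompose g a k : M) ∈ LinearMap.ker φ := by
  obtain ⟨c, hc⟩ := ha l
  rw [LinearMap.mem_ker, ← laurentCoeff_expand (σ := σ), hc, ← Algebra.smul_def,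
    laurentCoeff_smul_X_zpow, if_neg (by omega)]

end Expansion

section Lattices

variable {K : Type} [Field K] {n : ℕ} [n.AtLeastTwo]
variable {M : Type*} [AddCommGroup M] [Module (tiledOrder K n) M] [Module K[X] M]
  [IsScalarTower K[X] (tiledOrder K n) M]
variable {g : ℤ → AddSubgroup M} [SetLike.GradedSMul (homogeneousPart (tiledOrder K n)) g]
variable [Decomposition g]
variable {v : Fiber K n M} {φ : Fiber K n M →ₗ[K] K} {s t : ℤ} {i j : ℕ} {σ : ℤ}

namespace Bifiltration.IsAdapted

lemma expand_mem_ijSet (h : (fiberBifiltration K n g).IsAdapted v φ s t)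
    (hij : baseIdx n s t = (i, j, σ)) (a : M) : expand g φ σ a ∈ ijSet K n i j := fun l => by
  induction a using Decomposition.inductionOn g with
  | zero =>
    rw [map_zero]
    exact mem_xPow_iff.2 (zero_mem _)
  | add a b ha hb =>
    rw [map_add]
    exact mem_xPow_iff.2 (add_mem (mem_xPow_iff.1 ha) (mem_xPow_iff.1 hb))
  | @homogeneous m a =>
    rw [expand_of_mem a.2]
    obtain hd | hd := le_or_gt (dExp i j l) (σ + m)
    · exact homogSet_subset_xPow hd (smul_X_zpow_mem_homogSet _ _)
    · rw [LinearMap.mem_ker.1 (h.fiberFilt_le_ker hij hd ⟨a, a.2, rfl⟩), zero_smul]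
      exact mem_xPow_iff.2 (zero_mem _)

lemma single_mem_map_expand (h : (fiberBifiltration K n g).IsAdapted v φ s t)
    (hij : baseIdx n s t = (i, j, σ)) (l : Fin n) {f : RatFunc K} (hf : f ∈ xPow K (dExp i j l)) :
    Pi.single l f ∈ (fiberComap g (K ∙ v)).map (expand g φ σ) := by
  refine xPow_induction (P := fun f => Pi.single l f ∈ (fiberComap g (K ∙ v)).map (expand g φ σ))
    (fun p q hp hq => ?_) (fun m c hm => ?_) hf
  · rw [Pi.single_add]
    exact add_mem hp hq
  · obtain ⟨a, ha, hav⟩ := h.mem_fiberFilt hij (l := l) (m := m - σ) (by omega)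
    have hu := smul_mem_graded (matMonomial_mem_homogeneousPart (cExp_self l).le c) ha
      (zero_add (m - σ))
    have hfiber : fiberMap K l (matMonomial l l 0 (cExp_self l).le c • a) = c • v := by
      rw [fiberMap_matMonomial_smul, hav]
    refine ⟨_, mem_fiberComap_of_mem hu fun k => ?_, funext fun k => ?_⟩
    all_goals obtain rfl | hk := eq_or_ne k l
    · rw [hfiber]
      exact Submodule.smul_mem _ c (Submodule.mem_span_singleton_self v)
    · rw [fiberMap_matMonomial_smul_of_ne _ _ _ hk]
      exact zero_mem _
    · rw [expand_of_mem hu, hfiber, map_smul, h.apply_eq_one, smul_eq_mul, mul_one,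
        add_sub_cancel, Pi.single_eq_same]
    · rw [expand_of_mem hu, fiberMap_matMonomial_smul_of_ne _ _ _ hk, map_zero, zero_smul,
        Pi.single_eq_of_ne hk]

lemma ijSet_subset_map_expand (h : (fiberBifiltration K n g).IsAdapted v φ s t)
    (hij : baseIdx n s t = (i, j, σ)) :
    ijSet K n i j ⊆ (fiberComap g (K ∙ v)).map (expand g φ σ) := fun w hw => by
  rw [← Finset.univ_sum_single w]
  exact sum_mem fun l _ => h.single_mem_map_expand hij l (hw l)

lemma isCompl_fiberComap (htf : ∀ a : M, (X : K[X]) • a = 0 → a = 0)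
    (h : (fiberBifiltration K n g).IsAdapted v φ s t) :
    IsCompl (fiberComap g (K ∙ v)) (fiberComap g (LinearMap.ker φ)) := by
  refine ⟨disjoint_fiberComap htf h.disjoint_span_ker, codisjoint_iff_le_sup.2 fun a _ => ?_⟩
  obtain ⟨b, hb, hab⟩ := h.ijSet_subset_map_expand rfl (h.expand_mem_ijSet rfl a)
  refine Submodule.mem_sup.2 ⟨b, hb, a - b, ?_, add_sub_cancel b a⟩
  rw [← ker_expand, LinearMap.mem_ker, map_sub, hab, sub_self]

lemma ker_eq_bot (htf : ∀ a : M, (X : K[X]) • a = 0 → a = 0)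
    (hind : GradedIndecomposable (tiledOrder K n) M g)
    (h : (fiberBifiltration K n g).IsAdapted v φ s t) : LinearMap.ker φ = ⊥ := by
  by_contra hker
  refine hind.2 ⟨_, _, isGradedSubmodule_of_decompose_mem fun _ => decompose_mem_fiberComap,
    isGradedSubmodule_of_decompose_mem fun _ => decompose_mem_fiberComap,
    h.isCompl_fiberComap htf, fun hbot => ?_, fun hbot => hker (eq_bot_of_fiberComap_eq_bot hbot)⟩
  have hv : v = 0 := by simpa using eq_bot_of_fiberComap_eq_bot hbot
  exact h.notMem_ker (hv ▸ zero_mem _)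

end Bifiltration.IsAdapted

lemma GradedIndecomposable.exists_isAdapted_ker_eq_bot
    (hind : GradedIndecomposable (tiledOrder K n) M g)
    (htf : ∀ a : M, (X : K[X]) • a = 0 → a = 0) (hbdd : ∃ m₀, ∀ m < m₀, g m = ⊥) :
    ∃ v φ s t, (fiberBifiltration K n g).IsAdapted v φ s t ∧ LinearMap.ker φ = ⊥ := by
  have := hind.1
  obtain ⟨v, φ, s, t, h⟩ := Bifiltration.exists_isAdapted
    (exists_even_ne_bot (K := K) (n := n) (g := g) htf) (exists_even_eq_bot hbdd)
  exact ⟨v, φ, s, t, h, h.ker_eq_bot htf hind⟩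

end Lattices

section Isomorphisms

variable {K : Type} [Field K] {n : ℕ} [n.AtLeastTwo]
variable {M : Type*} [AddCommGroup M] [Module (tiledOrder K n) M] [Module K[X] M]
  [IsScalarTower K[X] (tiledOrder K n) M]
variable {g : ℤ → AddSubgroup M} [SetLike.GradedSMul (homogeneousPart (tiledOrder K n)) g]
variable [Decomposition g]
variable {v v' : Fiber K n M} {φ φ' : Fiber K n M →ₗ[K] K} {s s' t t' : ℤ}
variable {E : ℕ → ℕ → Submodule (tiledOrder K n) (Fin n → RatFunc K)}

lemma mem_iff_expand_mem_homogGroup (htf : ∀ a : M, (X : K[X]) • a = 0 → a = 0)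
    (hφ : Disjoint (LinearMap.ker φ) (LinearMap.ker φ')) (σ σ' : ℤ) {m : ℤ} {a : M} :
    a ∈ g m ↔ expand g φ σ a ∈ homogGroup K n (σ + m) ∧
      expand g φ' σ' a ∈ homogGroup K n (σ' + m) := by
  refine ⟨fun ha => ⟨expand_mem_homogGroup ha, expand_mem_homogGroup ha⟩, fun ⟨ha, ha'⟩ =>
    mem_of_decompose_eq_zero fun k hk =>
      eq_zero_of_fiberMap_eq_zero htf (decompose g a k).2 fun l =>
        Submodule.disjoint_def.1 hφ _ ?_ ?_⟩
  · exact fiberMap_decompose_mem_ker_of_expand_mem_homogGroup ha hk l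
  · exact fiberMap_decompose_mem_ker_of_expand_mem_homogGroup ha' hk l

variable
  (hE : ∀ i j : ℕ, 1 ≤ i → i < j → j ≤ n → (E i j : Set (Fin n → RatFunc K)) = ijSet K n i j)

include hE in
lemma coe_eq_ijSet_of_baseIdx (hst : s < t) (hts : t < s + n) :
    (E (baseIdx n s t).1 (baseIdx n s t).2.1 : Set (Fin n → RatFunc K)) =
      ijSet K n (baseIdx n s t).1 (baseIdx n s t).2.1 :=
  have h := (baseIdx_spec hst hts rfl).1
  hE _ _ h.1 h.2.1 h.2.2

namespace Bifiltration.IsAdapted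

/-- The map from `M` to the lattice `(s, t)` given by `expand`. -/
def toLattice (h : (fiberBifiltration K n g).IsAdapted v φ s t) :
    M →ₗ[tiledOrder K n] E (baseIdx n s t).1 (baseIdx n s t).2.1 :=
  (expand g φ (baseIdx n s t).2.2).codRestrict _ fun a =>
    (coe_eq_ijSet_of_baseIdx hE h.lt h.lt_add).ge (h.expand_mem_ijSet rfl a)

lemma ker_toLattice (h : (fiberBifiltration K n g).IsAdapted v φ s t) :
    LinearMap.ker (h.toLattice hE) = fiberComap g (LinearMap.ker φ) :=
  (LinearMap.ker_codRestrict ..).trans ker_expand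

lemma exists_toLattice_eq (h : (fiberBifiltration K n g).IsAdapted v φ s t)
    (w : E (baseIdx n s t).1 (baseIdx n s t).2.1) :
    ∃ a ∈ fiberComap g (K ∙ v), h.toLattice hE a = w := by
  obtain ⟨a, ha, haw⟩ := h.ijSet_subset_map_expand rfl
    ((coe_eq_ijSet_of_baseIdx hE h.lt h.lt_add).le w.2)
  exact ⟨a, ha, Subtype.ext haw⟩

include hE

lemma gradedIsoTo (htf : ∀ a : M, (X : K[X]) • a = 0 → a = 0)
    (h : (fiberBifiltration K n g).IsAdapted v φ s t) (hφ : LinearMap.ker φ = ⊥) :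
    GradedIsoTo (tiledOrder K n) E M g s t := by
  have hdisj : Disjoint (LinearMap.ker φ) (LinearMap.ker φ) := disjoint_self.2 hφ
  refine ⟨LinearEquiv.ofBijective (h.toLattice hE) ⟨?_, fun w => ?_⟩, fun m a => ?_⟩
  · refine (injective_iff_map_eq_zero (h.toLattice hE)).2 fun a ha => ?_
    have hker := (h.ker_toLattice hE).le ha
    exact Submodule.disjoint_def.1 (disjoint_fiberComap htf hdisj) a hker hker
  · obtain ⟨a, -, ha⟩ := h.exists_toLattice_eq hE w
    exact ⟨a, ha⟩
  · exact (mem_iff_expand_mem_homogGroup htf hdisj _ _).trans (and_self_iff)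

lemma gradedIsoToSum (htf : ∀ a : M, (X : K[X]) • a = 0 → a = 0)
    (h : (fiberBifiltration K n g).IsAdapted v φ s t)
    (h' : (fiberBifiltration K n g).IsAdapted v' φ' s' t') (hv' : φ v' = 0) (hv : φ' v = 0)
    (hφ : Disjoint (LinearMap.ker φ) (LinearMap.ker φ')) :
    GradedIsoToSum (tiledOrder K n) E M g s t s' t' := by
  refine ⟨LinearEquiv.ofBijective ((h.toLattice hE).prod (h'.toLattice hE)) ⟨?_, fun w => ?_⟩,
    fun m a => mem_iff_expand_mem_homogGroup htf hφ _ _⟩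
  · refine (injective_iff_map_eq_zero ((h.toLattice hE).prod (h'.toLattice hE))).2 fun a ha => ?_
    exact Submodule.disjoint_def.1 (disjoint_fiberComap htf hφ) a
      ((h.ker_toLattice hE).le (congrArg Prod.fst ha))
      ((h'.ker_toLattice hE).le (congrArg Prod.snd ha))
  · obtain ⟨a, ha, haw⟩ := h.exists_toLattice_eq hE w.1
    obtain ⟨b, hb, hbw⟩ := h'.exists_toLattice_eq hE w.2
    have ha' : h'.toLattice hE a = 0 := LinearMap.mem_ker.1 <| h'.ker_toLattice hE ▸
      fiberComap_mono ((Submodule.span_singleton_le_iff_mem _ _).2 hv) ha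
    have hb' : h.toLattice hE b = 0 := LinearMap.mem_ker.1 <| h.ker_toLattice hE ▸
      fiberComap_mono ((Submodule.span_singleton_le_iff_mem _ _).2 hv') hb
    exact ⟨a + b, Prod.ext (by simp [haw, hb']) (by simp [hbw, ha'])⟩

end Bifiltration.IsAdapted

end Isomorphisms

section Sequences

variable {R A B C : Type*} [AddCommGroup A] [AddCommGroup B] [AddCommGroup C]

lemma eq_zero_of_smul_eq_zero_of_exact [Ring R] [Module R A] [Module R B] [Module R C]
    {f : A →ₗ[R] B} {g : B →ₗ[R] C} (hf : Function.Injective f) (hfg : Function.Exact f g) {r : R}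
    (hA : ∀ a : A, r • a = 0 → a = 0)
    (hC : ∀ c : C, r • c = 0 → c = 0) {b : B} (hb : r • b = 0) : b = 0 := by
  obtain ⟨a, rfl⟩ := (hfg b).1 (hC _ (by rw [← map_smul, hb, map_zero]))
  rw [← map_smul] at hb
  rw [hA a (hf (hb.trans (map_zero f).symm)), map_zero]

lemma exists_section_of_isCompl_ker [Ring R] [Module R B] [Module R C]
    {gB : ℤ → AddSubgroup B} {gC : ℤ → AddSubgroup C} [Decomposition gB] [Decomposition gC]
    {g : B →ₗ[R] C} (hg : Function.Surjective g) (hgdeg : ∀ m, ∀ b ∈ gB m, g b ∈ gC m)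
    {S : Submodule R B} (hS : ∀ b ∈ S, ∀ m, (decompose gB b m : B) ∈ S)
    (hcompl : IsCompl S (LinearMap.ker g)) :
    ∃ sec : C →ₗ[R] B, g ∘ₗ sec = LinearMap.id ∧ ∀ m, ∀ c ∈ gC m, sec c ∈ gB m := by
  let e : S ≃ₗ[R] C := LinearEquiv.ofBijective (g.domRestrict S)
    ⟨LinearMap.injective_domRestrict_iff.2 hcompl.disjoint,
      (LinearMap.surjective_domRestrict_iff hg).2 hcompl.codisjoint⟩
  have he (c : C) : g (e.symm c) = c := e.apply_symm_apply c
  refine ⟨S.subtype ∘ₗ e.symm, LinearMap.ext he, fun m c hc => ?_⟩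
  refine (mem_iff_map_mem (f := g.toAddMonoidHom) (h := gC) hgdeg (S := S.toAddSubgroup) hS
    (fun b hb hgb => Submodule.disjoint_def.1 hcompl.disjoint b hb hgb) (e.symm c).2).2 ?_
  rwa [LinearMap.toAddMonoidHom_coe, he]

end Sequences

section Extensions

variable {K : Type} [Field K] {n : ℕ} [n.AtLeastTwo]
variable {A : Type*} [AddCommGroup A] [Module (tiledOrder K n) A] [Module K[X] A]
  [IsScalarTower K[X] (tiledOrder K n) A]
variable {B : Type*} [AddCommGroup B] [Module (tiledOrder K n) B] [Module K[X] B]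
  [IsScalarTower K[X] (tiledOrder K n) B]
variable {C : Type*} [AddCommGroup C] [Module (tiledOrder K n) C] [Module K[X] C]
  [IsScalarTower K[X] (tiledOrder K n) C]
variable {gA : ℤ → AddSubgroup A} {gB : ℤ → AddSubgroup B} {gC : ℤ → AddSubgroup C}
variable {f : A →ₗ[tiledOrder K n] B} {g : B →ₗ[tiledOrder K n] C}
variable [SetLike.GradedSMul (homogeneousPart (tiledOrder K n)) gB]
  [SetLike.GradedSMul (homogeneousPart (tiledOrder K n)) gC] [Decomposition gB] [Decomposition gC]

lemma Fiber.map_exact [SetLike.GradedSMul (homogeneousPart (tiledOrder K n)) gA]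
    [Decomposition gA] (hf : Function.Injective f) (hfg : Function.Exact f g)
    (hfdeg : ∀ m, ∀ a ∈ gA m, f a ∈ gB m) (hgdeg : ∀ m, ∀ b ∈ gB m, g b ∈ gC m)
    (htf : ∀ a : C, (X : K[X]) • a = 0 → a = 0) :
    Function.Exact (Fiber.map f) (Fiber.map g) := by
  intro v
  refine ⟨fun hv => ?_, ?_⟩
  · obtain ⟨m, hm⟩ := exists_mem_fiberFilt (g := gB) v
    obtain ⟨u, -, hu⟩ := (map_fiberFilt_of_exact hf hfg hfdeg hgdeg htf 0 m).ge ⟨hm, hv⟩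
    exact ⟨u, hu⟩
  · rintro ⟨u, rfl⟩
    obtain ⟨a, rfl⟩ := fiberMap_zero_surjective u
    rw [Fiber.map_fiberMap, Fiber.map_fiberMap, hfg.apply_apply_eq_zero, map_zero]

lemma exists_lift_or_exists_isAdapted [SetLike.GradedSMul (homogeneousPart (tiledOrder K n)) gA]
    [Decomposition gA] (hf : Function.Injective f) (hg : Function.Surjective g)
    (hfg : Function.Exact f g) (hfdeg : ∀ m, ∀ a ∈ gA m, f a ∈ gB m)
    (hgdeg : ∀ m, ∀ b ∈ gB m, g b ∈ gC m) (htf : ∀ c : C, (X : K[X]) • c = 0 → c = 0)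
    {u : Fiber K n A} {φ : Fiber K n A →ₗ[K] K} {w : Fiber K n C} {ψ : Fiber K n C →ₗ[K] K}
    {s s' t t' : ℤ} (hu : (fiberBifiltration K n gA).IsAdapted u φ s t)
    (hφ : LinearMap.ker φ = ⊥) (hw : (fiberBifiltration K n gC).IsAdapted w ψ s' t')
    (hψ : LinearMap.ker ψ = ⊥) :
    (∃ β, (fiberBifiltration K n gB).IsAdapted β (ψ ∘ₗ Fiber.map g) s' t') ∨
    s < s' ∧ t < t' ∧ ∃ β β' χ χ', (fiberBifiltration K n gB).IsAdapted β χ s' t ∧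
      (fiberBifiltration K n gB).IsAdapted β' χ' s t' ∧ χ β' = 0 ∧ χ' β = 0 ∧
      Disjoint (LinearMap.ker χ) (LinearMap.ker χ') :=
  Bifiltration.exists_lift_or_exists_adapted_basis_of_exact
    (Fiber.map_injective (gC := gC) hf hfg htf) (Fiber.map_exact hf hfg hfdeg hgdeg htf)
    (fun _ => map_fiberFilt_of_exact hf hfg hfdeg hgdeg htf _ _)
    (fun _ => map_fiberFilt_of_exact hf hfg hfdeg hgdeg htf _ _)
    (fun _ => map_fiberFilt_of_surjective hg hgdeg _ _)
    (fun _ => map_fiberFilt_of_surjective hg hgdeg _ _) hu hφ hw hψ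

lemma ker_eq_fiberComap (hgdeg : ∀ m, ∀ b ∈ gB m, g b ∈ gC m)
    (htf : ∀ a : C, (X : K[X]) • a = 0 → a = 0) :
    LinearMap.ker g = fiberComap gB (LinearMap.ker (Fiber.map g)) := by
  have hdecomp (b : B) (m : ℤ) : g (decompose gB b m) = decompose gC (g b) m :=
    (decompose_map (f := g.toAddMonoidHom) hgdeg b m).symm
  ext b
  refine ⟨fun hb l m => ?_, fun hb => eq_zero_of_decompose_eq_zero (g := gC) fun m =>
    eq_zero_of_fiberMap_eq_zero (K := K) (n := n) htf (decompose gC (g b) m).2 fun l => ?_⟩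
  · rw [LinearMap.mem_ker, Fiber.map_fiberMap, hdecomp, LinearMap.mem_ker.1 hb]
    simp
  · rw [← hdecomp, ← Fiber.map_fiberMap g]
    exact hb l m

lemma exists_section_of_isAdapted (hg : Function.Surjective g)
    (hgdeg : ∀ m, ∀ b ∈ gB m, g b ∈ gC m) (htfB : ∀ b : B, (X : K[X]) • b = 0 → b = 0)
    (htfC : ∀ c : C, (X : K[X]) • c = 0 → c = 0) {v : Fiber K n B} {φ : Fiber K n C →ₗ[K] K}
    {s t : ℤ} (hv : (fiberBifiltration K n gB).IsAdapted v (φ ∘ₗ Fiber.map g) s t)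
    (hφ : LinearMap.ker φ = ⊥) :
    ∃ sec : C →ₗ[tiledOrder K n] B, g ∘ₗ sec = LinearMap.id ∧ ∀ m, ∀ c ∈ gC m, sec c ∈ gB m := by
  refine exists_section_of_isCompl_ker hg hgdeg (S := fiberComap gB (K ∙ v))
    (fun _ => decompose_mem_fiberComap) ?_
  rw [ker_eq_fiberComap hgdeg htfC, ← LinearMap.ker_comp_of_ker_eq_bot _ hφ]
  exact hv.isCompl_fiberComap htfB

end Extensions

theorem statement16_general {K : Type} [Field K] {n : ℕ} (hn : 2 ≤ n)
    {Λ : Subalgebra K[X] (Matrix (Fin n) (Fin n) (RatFunc K))}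
    (hΛ : (Λ : Set (Matrix (Fin n) (Fin n) (RatFunc K))) = lambdaCarrier K n)
    {E : ℕ → ℕ → Submodule Λ (Fin n → RatFunc K)}
    (hE : ∀ i j : ℕ, 1 ≤ i → i < j → j ≤ n → (E i j : Set (Fin n → RatFunc K)) = ijSet K n i j)
    {A : Type*} [AddCommGroup A] [Module Λ A] [Module K[X] A] [IsScalarTower K[X] Λ A]
    {gA : ℤ → AddSubgroup A} (hgA : IsModGrading Λ A gA)
    {B : Type*} [AddCommGroup B] [Module Λ B]
    {gB : ℤ → AddSubgroup B} (hgB : IsModGrading Λ B gB)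
    {C : Type*} [AddCommGroup C] [Module Λ C] [Module K[X] C] [IsScalarTower K[X] Λ C]
    {gC : ℤ → AddSubgroup C} (hgC : IsModGrading Λ C gC)
    (hAbdd : ∃ m₀, ∀ m < m₀, gA m = ⊥) (hAtf : ∀ a : A, (X : K[X]) • a = 0 → a = 0)
    (hAind : GradedIndecomposable Λ A gA)
    (hCbdd : ∃ m₀, ∀ m < m₀, gC m = ⊥) (hCtf : ∀ c : C, (X : K[X]) • c = 0 → c = 0)
    (hCind : GradedIndecomposable Λ C gC)
    {f : A →ₗ[Λ] B} {g : B →ₗ[Λ] C}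
    (hfdeg : ∀ m, ∀ a ∈ gA m, f a ∈ gB m) (hgdeg : ∀ m, ∀ b ∈ gB m, g b ∈ gC m)
    (hf : Function.Injective f) (hg : Function.Surjective g) (hfg : Function.Exact f g)
    (hnonsplit : ¬ ∃ sec : C →ₗ[Λ] B,
      g ∘ₗ sec = LinearMap.id ∧ ∀ m, ∀ c ∈ gC m, sec c ∈ gB m) :
    ∃ s s' t t' : ℤ, s < s' ∧ s' < t ∧ t < t' ∧ t' < s + n ∧
      GradedIsoTo Λ E A gA s t ∧ GradedIsoToSum Λ E B gB s t' s' t ∧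
      GradedIsoTo Λ E C gC s' t' := by
  have : n.AtLeastTwo := ⟨hn⟩
  obtain rfl : Λ = tiledOrder K n := SetLike.coe_injective hΛ
  let : Module K[X] B := Module.compHom B (algebraMap K[X] (tiledOrder K n))
  have : IsScalarTower K[X] (tiledOrder K n) B := IsScalarTower.of_compHom ..
  have := hgA.1.chooseDecomposition
  have := hgB.1.chooseDecomposition
  have := hgC.1.chooseDecomposition
  have := hgA.gradedSMul
  have := hgB.gradedSMul
  have := hgC.gradedSMul
  have hBtf := fun b : B => eq_zero_of_smul_eq_zero_of_exact (f := f.restrictScalars K[X])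
    (g := g.restrictScalars K[X]) hf hfg hAtf hCtf (b := b)
  obtain ⟨a, φ, s, t, ha, hφ⟩ := hAind.exists_isAdapted_ker_eq_bot hAtf hAbdd
  obtain ⟨c, ψ, s', t', hc, hψ⟩ := hCind.exists_isAdapted_ker_eq_bot hCtf hCbdd
  rcases exists_lift_or_exists_isAdapted hf hg hfg hfdeg hgdeg hCtf ha hφ hc hψ with
    ⟨b, hb⟩ | ⟨hss', htt', b, b', χ, χ', hb, hb', hχb', hχ'b, hdisj⟩
  · exact absurd (exists_section_of_isAdapted hg hgdeg hBtf hCtf hb hψ) hnonsplit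
  · exact ⟨s, s', t, t', hss', hb.lt, htt', hb'.lt_add, ha.gradedIsoTo hE hAtf hφ,
      hb'.gradedIsoToSum hE hBtf hb hχ'b hχb' hdisj.symm, hc.gradedIsoTo hE hCtf hψ⟩

/-- Let `0 → A → B → C → 0` be a non-split short exact sequence of graded `Λ`-modules (with
degree-preserving maps) in which `A` and `C` are indecomposable graded Cohen–Macaulay
`Λ`-modules. Then there exist integers `s < s' < t < t' < s + n` with `A ≅ (s,t)`,
`B ≅ (s,t') ⊕ (s',t)` and `C ≅ (s',t')` as graded `Λ`-modules (in the extended notation). -/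
theorem statement16 (K : Type) [Field K] (n : ℕ) (hn : 3 ≤ n)
    (Λ : Subalgebra (Polynomial K) (Matrix (Fin n) (Fin n) (RatFunc K)))
    (hΛ : (Λ : Set (Matrix (Fin n) (Fin n) (RatFunc K))) = lambdaCarrier K n)
    (E : ℕ → ℕ → Submodule ↥Λ (Fin n → RatFunc K))
    (hE : ∀ i j : ℕ, 1 ≤ i → i < j → j ≤ n →
      (E i j : Set (Fin n → RatFunc K)) = ijSet K n i j)
    -- the graded modules `A`, `B`, `C`
    (A : Type u) [AddCommGroup A] [Module ↥Λ A]
    [Module (Polynomial K) A] [IsScalarTower (Polynomial K) ↥Λ A]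
    (gA : ℤ → AddSubgroup A) (hgA : IsModGrading Λ A gA)
    (B : Type u) [AddCommGroup B] [Module ↥Λ B]
    (gB : ℤ → AddSubgroup B) (hgB : IsModGrading Λ B gB)
    (C : Type u) [AddCommGroup C] [Module ↥Λ C]
    [Module (Polynomial K) C] [IsScalarTower (Polynomial K) ↥Λ C]
    (gC : ℤ → AddSubgroup C) (hgC : IsModGrading Λ C gC)
    -- `A` and `C` are Cohen–Macaulay and indecomposable as graded modules
    (hAfin : Module.Finite (Polynomial K) A) (hAtf : NoZeroSMulDivisors (Polynomial K) A)
    (hAind : GradedIndecomposable Λ A gA)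
    (hCfin : Module.Finite (Polynomial K) C) (hCtf : NoZeroSMulDivisors (Polynomial K) C)
    (hCind : GradedIndecomposable Λ C gC)
    -- a short exact sequence `0 → A → B → C → 0` of degree-preserving maps
    (f : A →ₗ[↥Λ] B) (g : B →ₗ[↥Λ] C)
    (hfdeg : ∀ (m : ℤ), ∀ v ∈ gA m, f v ∈ gB m)
    (hgdeg : ∀ (m : ℤ), ∀ v ∈ gB m, g v ∈ gC m)
    (hf : Function.Injective f) (hg : Function.Surjective g)
    (hexact : LinearMap.range f = LinearMap.ker g)
    -- which is non-split in the graded sense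
    (hnonsplit : ¬ ∃ sec : C →ₗ[↥Λ] B,
      g ∘ₗ sec = LinearMap.id ∧ ∀ (m : ℤ), ∀ v ∈ gC m, sec v ∈ gB m) :
    ∃ s s' t t' : ℤ, s < s' ∧ s' < t ∧ t < t' ∧ t' < s + n ∧
      GradedIsoTo Λ E A gA s t ∧
      GradedIsoToSum Λ E B gB s t' s' t ∧
      GradedIsoTo Λ E C gC s' t' := by
  exact statement16_general (by omega) hΛ hE hgA hgB hgC
    hgA.exists_forall_lt_eq_bot (fun _ h => (smul_eq_zero.1 h).resolve_left X_ne_zero) hAind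
    hgC.exists_forall_lt_eq_bot (fun _ h => (smul_eq_zero.1 h).resolve_left X_ne_zero) hCind
    hfdeg hgdeg hf hg (LinearMap.exact_iff.2 hexact.symm) hnonsplit
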